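/- arXiv:1911.06575 — 2 statements merged into one kernel-verified Lean document; each statement's English description precedes it below -/
import Mathlib

section
/- Every non-semisimple Lie subalgebra of a complex semisimple Lie algebra 𝔤ᶜ is an R-subalgebra, i.e. it is contained in a proper regular subalgebra of 𝔤ᶜ. Consequently every S-subalgebra of 𝔤ᶜ is semisimple. -/
/-!
Let `κ` be the Killing form of `L`, which is nondegenerate by Cartan's criterion. A subalgebra `a`
that is not semisimple has a nonzero abelian ideal `I`.

If some `x ∈ I` is not `ad`-nilpotent on `L`, then `(ad x) ^ 2` kills `a`, so `a` lies in the proper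
subalgebra `engel x = L^0(ad x)`. This is the centralizer of the semisimple part of `x`, so its
Cartan subalgebras are Cartan subalgebras of `L` (`RSub.isRegular_engel`).

If all elements of `I` are `ad`-nilpotent, enlarge `a` to a subalgebra `q` maximal among those
having a nonzero ideal of elements `ad`-nilpotent on `L`; such a `q` behaves like a
parabolic subalgebra. By maximality `q` is the normalizer of each such ideal. The radical `N` of `κ` restricted to `q`
contains these ideals, and a trace argument as in Cartan's criterion shows that `N` itself is
one of them. Engel's theorem then gives that the orthogonal of `q` is `N`, so that `q` and `N` are
orthogonals of each other (`RSub.isRegular_of_maximal`). Finally a Cartan subalgebra `engel_q z` of `q`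
coincides with `engel_L z`, hence is a Cartan subalgebra of `L`, and `q` is regular
(`RSub.isRegular_of_orthogonal`). No structure theory of parabolic subalgebras is used.

Throughout, `L^μ` denotes the generalized `μ`-eigenspace of the `ad x` (or operator) at hand.
-/

/-!
STATEMENT 0: Every non-semisimple Lie subalgebra of a complex semisimple Lie algebra 𝔤ᶜ is an
R-subalgebra, i.e. it is contained in a proper regular subalgebra of 𝔤ᶜ.  Consequently every
S-subalgebra of 𝔤ᶜ is semisimple.
-/

/-- A Lie subalgebra `r` of `L` is *regular* if there is a Cartan subalgebra `H` of `L`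
with `⁅H, r⁆ ⊆ r`. -/
def LieSubalgebra.IsRegularSubalgebra {K L : Type*} [Field K] [LieRing L] [LieAlgebra K L]
    (r : LieSubalgebra K L) : Prop :=
  ∃ H : LieSubalgebra K L, H.IsCartanSubalgebra ∧ ∀ x ∈ H, ∀ y ∈ r, ⁅x, y⁆ ∈ r

/-- A Lie subalgebra is an *R-subalgebra* if it is contained in a proper regular subalgebra. -/
def LieSubalgebra.IsRSubalgebra {K L : Type*} [Field K] [LieRing L] [LieAlgebra K L]
    (a : LieSubalgebra K L) : Prop :=
  ∃ r : LieSubalgebra K L, r.IsRegularSubalgebra ∧ r ≠ ⊤ ∧ a ≤ r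

/-- A Lie subalgebra is an *S-subalgebra* if it is not an R-subalgebra. -/
def LieSubalgebra.IsSSubalgebra {K L : Type*} [Field K] [LieRing L] [LieAlgebra K L]
    (a : LieSubalgebra K L) : Prop :=
  ¬ a.IsRSubalgebra

namespace RSub

open Module LieAlgebra

/-! ### Consequences of the theorems of Lie and Engel -/

/-- Lie's theorem for the module `B / (A ⊓ B)`: it contains a common eigenvector,
lifted here to `B`. -/
lemma exists_weightVector_mod {b V : Type*} [LieRing b] [LieAlgebra ℂ b] [IsSolvable b]
    [AddCommGroup V] [Module ℂ V] [FiniteDimensional ℂ V] [LieRingModule b V] [LieModule ℂ b V]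
    {A B : LieSubmodule ℂ b V} (h : ¬ B ≤ A) :
    ∃ v ∈ B, v ∉ A ∧ ∃ χ : b → ℂ, ∀ x : b, ⁅x, v⁆ - χ x • v ∈ A := by
  let Q : LieSubmodule ℂ b (V ⧸ A) := B.map (LieSubmodule.Quotient.mk' A)
  have hQ : Nontrivial Q := by
    rw [LieSubmodule.nontrivial_iff_ne_bot]
    intro hbot
    apply h
    intro v hv
    have : LieSubmodule.Quotient.mk' A v ∈ Q := LieSubmodule.mem_map_of_mem hv
    rw [hbot, LieSubmodule.mem_bot] at this
    exact LieSubmodule.Quotient.mk_eq_zero'.mp this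
  obtain ⟨χ, hχ⟩ := LieModule.exists_nontrivial_weightSpace_of_isSolvable ℂ b Q
  obtain ⟨⟨w, hw⟩, hw0⟩ := exists_ne (0 : LieModule.weightSpace Q χ)
  rw [LieModule.mem_weightSpace] at hw
  obtain ⟨w, hwQ⟩ := w
  obtain ⟨v, hv, rfl⟩ := LieSubmodule.mem_map _ |>.mp hwQ
  refine ⟨v, hv, fun hA ↦ hw0 ?_, χ, fun x ↦ ?_⟩
  · ext
    exact (LieSubmodule.Quotient.mk_eq_zero' (N := A)).mpr hA
  · have := congrArg Subtype.val (hw x)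
    rw [← LieSubmodule.Quotient.mk_eq_zero']
    change ⁅x, LieSubmodule.Quotient.mk' A v⁆ = χ x • LieSubmodule.Quotient.mk' A v at this
    change LieSubmodule.Quotient.mk' A _ = 0
    rw [map_sub, map_smul, LieModuleHom.map_lie, this, sub_self]

/-- For a solvable Lie algebra the operators are simultaneously triangular (Lie's theorem), and the
product of a triangular matrix and a strictly triangular one is nilpotent. The induction is on the
dimension `n` of the module, peeling off a common eigenvector. -/
lemma isNilpotent_toEnd_mul {b : Type*} [LieRing b] [LieAlgebra ℂ b] [IsSolvable b] (c y : b)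
    (n : ℕ) : ∀ {V : Type*} [AddCommGroup V] [Module ℂ V] [FiniteDimensional ℂ V]
    [LieRingModule b V] [LieModule ℂ b V], finrank ℂ V = n →
    IsNilpotent (LieModule.toEnd ℂ b V c) →
    IsNilpotent (LieModule.toEnd ℂ b V y * LieModule.toEnd ℂ b V c) := by
  induction n with
  | zero =>
    intro V _ _ _ _ _ hV hc
    have := finrank_zero_iff.mp hV
    exact ⟨1, Subsingleton.elim _ _⟩
  | succ n ih =>
    intro V _ _ _ _ _ hV hc
    have : Nontrivial V := nontrivial_of_finrank_pos (R := ℂ) (by omega)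
    obtain ⟨χ, hχ⟩ := LieModule.exists_nontrivial_weightSpace_of_isSolvable ℂ b V
    obtain ⟨⟨v, hv⟩, hv0⟩ := exists_ne (0 : LieModule.weightSpace V χ)
    rw [LieModule.mem_weightSpace] at hv
    have hv0 : v ≠ 0 := fun h ↦ hv0 (Subtype.ext h)
    let W : LieSubmodule ℂ b V :=
      { ℂ ∙ v with
        lie_mem := by
          intro x m hm
          obtain ⟨t, rfl⟩ := Submodule.mem_span_singleton.mp hm
          exact Submodule.mem_span_singleton.mpr ⟨t * χ x, by rw [lie_smul, hv, smul_smul]⟩ }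
    -- the eigenvalue of the nilpotent operator `c` on `v` is zero
    have hcv : ⁅c, v⁆ = 0 := by
      obtain ⟨k, hk⟩ := hc
      have : ∀ k, (LieModule.toEnd ℂ b V c ^ k) v = χ c ^ k • v := by
        intro k
        induction k with
        | zero => simp
        | succ k ihk => rw [pow_succ', Module.End.mul_apply, ihk, map_smul,
            LieModule.toEnd_apply_apply, hv, smul_smul, pow_succ]
      have h2 := this k
      rw [hk, LinearMap.zero_apply, eq_comm, smul_eq_zero, or_iff_left hv0] at h2
      rw [hv, eq_zero_of_pow_eq_zero h2, zero_smul]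
    have hrank : finrank ℂ (V ⧸ W) = n := by
      have h1 := Submodule.finrank_quotient_add_finrank (W : Submodule ℂ V)
      have h2 : finrank ℂ (W : Submodule ℂ V) = 1 := finrank_span_singleton hv0
      change finrank ℂ (V ⧸ (W : Submodule ℂ V)) = n
      omega
    have hpow : ∀ (f : Module.End ℂ V) (g : Module.End ℂ (V ⧸ W))
        (_ : ∀ u, g (LieSubmodule.Quotient.mk' W u) = LieSubmodule.Quotient.mk' W (f u)) (k : ℕ)
        (u : V), (g ^ k) (LieSubmodule.Quotient.mk' W u) =
          LieSubmodule.Quotient.mk' W ((f ^ k) u) := by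
      intro f g h k
      induction k with
      | zero => simp
      | succ k ihk => intro u; rw [pow_succ', pow_succ', Module.End.mul_apply, ihk, h]; rfl
    have hc' : IsNilpotent (LieModule.toEnd ℂ b (V ⧸ W) c) := by
      obtain ⟨k, hk⟩ := hc
      refine ⟨k, LinearMap.ext fun u ↦ ?_⟩
      obtain ⟨u, rfl⟩ := LieSubmodule.Quotient.surjective_mk' W u
      rw [hpow (LieModule.toEnd ℂ b V c) _ (fun u ↦ rfl), hk]
      simp
    have : FiniteDimensional ℂ (V ⧸ W) :=
      inferInstanceAs (FiniteDimensional ℂ (V ⧸ (W : Submodule ℂ V)))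
    obtain ⟨k, hk⟩ := ih hrank hc'
    refine ⟨k + 1, LinearMap.ext fun u ↦ ?_⟩
    have h1 := hpow (LieModule.toEnd ℂ b V y * LieModule.toEnd ℂ b V c)
      (LieModule.toEnd ℂ b (V ⧸ W) y * LieModule.toEnd ℂ b (V ⧸ W) c) (fun u ↦ rfl) k u
    rw [hk, LinearMap.zero_apply, eq_comm] at h1
    have h2 := LieSubmodule.Quotient.mk_eq_zero'.mp h1
    obtain ⟨t, ht⟩ := Submodule.mem_span_singleton.mp h2
    rw [pow_succ', Module.End.mul_apply, ← ht]
    simp [hcv]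

/-- By Engel's theorem `I` acts nilpotently, so its lower central series on `V` is a finite
filtration stable under all of `q`; `y` moves each term to the next one. -/
lemma isNilpotent_toEnd_mul_of_ideal {q V : Type*} [LieRing q] [LieAlgebra ℂ q]
    [AddCommGroup V] [Module ℂ V] [FiniteDimensional ℂ V] [LieRingModule q V] [LieModule ℂ q V]
    (I : LieIdeal ℂ q) (hI : ∀ y ∈ I, IsNilpotent (LieModule.toEnd ℂ q V y)) (x : q) {y : q}
    (hy : y ∈ I) : IsNilpotent (LieModule.toEnd ℂ q V x * LieModule.toEnd ℂ q V y) := by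
  have : LieModule.IsNilpotent I V := by
    rw [LieModule.isNilpotent_iff_forall' (R := ℂ)]
    rintro ⟨y, hy⟩
    exact hI y hy
  obtain ⟨k, hk⟩ := (LieModule.isNilpotent_iff ℂ I V).mp this
  rw [← LieSubmodule.toSubmodule_inj, ← LieIdeal.coe_lcs_eq] at hk
  refine ⟨k, LinearMap.ext fun v ↦ ?_⟩
  have : ∀ k, ((LieModule.toEnd ℂ q V x * LieModule.toEnd ℂ q V y) ^ k) v ∈ I.lcs V k := by
    intro k
    induction k with
    | zero => simp
    | succ k ih =>
      rw [pow_succ', Module.End.mul_apply, LieIdeal.lcs_succ]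
      exact LieSubmodule.lie_mem _ (LieSubmodule.lie_mem_lie hy ih)
  have h := this k
  rw [← LieSubmodule.mem_toSubmodule, hk] at h
  simpa using h

lemma isSolvable_of_lie_mem {b : Type*} [LieRing b] [LieAlgebra ℂ b] (J : LieIdeal ℂ b)
    [IsSolvable J] (h : ∀ x y : b, ⁅x, y⁆ ∈ J) : IsSolvable b := by
  obtain ⟨k, hk⟩ := IsSolvable.solvable ℂ J
  rw [LieIdeal.derivedSeries_eq_bot_iff] at hk
  refine IsSolvable.mk (R := ℂ) (k := k + 1) ?_
  rw [derivedSeries_def, derivedSeriesOfIdeal_add, eq_bot_iff, ← hk]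
  apply derivedSeriesOfIdeal_mono
  rw [derivedSeriesOfIdeal_succ, derivedSeriesOfIdeal_zero, LieSubmodule.lie_le_iff]
  exact fun x _ y _ ↦ h x y

/-! ### Operators scalar on generalized eigenspaces -/

/-- The operator acting as the scalar `φ μ` on each generalized eigenspace of `f`. For `φ = id` this
is the semisimple part of `f`. -/
lemma exists_end_eq_smul {V : Type*} [AddCommGroup V] [Module ℂ V] [FiniteDimensional ℂ V]
    (f : End ℂ V) (φ : ℂ → ℂ) :
    ∃ D : End ℂ V, ∀ μ, ∀ v ∈ f.maxGenEigenspace μ, D v = φ μ • v := by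
  classical
  have hint : DirectSum.IsInternal f.maxGenEigenspace :=
    DirectSum.isInternal_submodule_of_iSupIndep_of_iSup_eq_top
      (Module.End.independent_maxGenEigenspace f) (Module.End.iSup_maxGenEigenspace_eq_top f)
  let e := LinearEquiv.ofBijective (DirectSum.coeLinearMap f.maxGenEigenspace) hint
  refine ⟨DirectSum.toModule ℂ ℂ V (fun μ ↦ φ μ • (f.maxGenEigenspace μ).subtype) ∘ₗ
    (e.symm : V →ₗ[ℂ] _), fun μ v hv ↦ ?_⟩
  have : e.symm v = DirectSum.lof ℂ ℂ (fun μ ↦ f.maxGenEigenspace μ) μ ⟨v, hv⟩ := by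
    rw [LinearEquiv.symm_apply_eq]
    exact (DirectSum.coeLinearMap_lof (A := f.maxGenEigenspace) (i := μ) ⟨v, hv⟩).symm
  simp only [LinearMap.comp_apply, LinearEquiv.coe_coe, this, DirectSum.toModule_lof]
  simp

lemma induction_maxGenEigenspace {V : Type*} [AddCommGroup V] [Module ℂ V] [FiniteDimensional ℂ V]
    (f : End ℂ V) {p : V → Prop} (hp : ∀ μ, ∀ v ∈ f.maxGenEigenspace μ, p v) (h0 : p 0)
    (hadd : ∀ v w, p v → p w → p (v + w)) (v : V) : p v := by
  have hv : v ∈ ⨆ μ, f.maxGenEigenspace μ := by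
    rw [Module.End.iSup_maxGenEigenspace_eq_top]; trivial
  exact Submodule.iSup_induction _ (motive := p) hv hp h0 hadd

/-- A subspace stable under `f` is the sum of its intersections with the generalized eigenspaces, on
each of which `g` is a scalar. -/
lemma apply_mem_of_stable {V : Type*} [AddCommGroup V] [Module ℂ V] [FiniteDimensional ℂ V]
    {f g : End ℂ V} {φ : ℂ → ℂ} (hg : ∀ μ, ∀ v ∈ f.maxGenEigenspace μ, g v = φ μ • v)
    {W : Submodule ℂ V} (hW : ∀ v ∈ W, f v ∈ W) {v : V} (hv : v ∈ W) : g v ∈ W := by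
  have h := Submodule.eq_iSup_inf_genEigenspace (f := f) ⊤ hW
    (Module.End.iSup_maxGenEigenspace_eq_top f)
  rw [h] at hv
  refine Submodule.iSup_induction _ (motive := fun v ↦ g v ∈ W) hv ?_ (by simp) ?_
  · rintro μ v ⟨h1, h2⟩
    rw [hg μ v h2]
    exact W.smul_mem _ h1
  · intro a b ha hb
    rw [map_add]; exact W.add_mem ha hb

/-- The trace argument from the proof of Cartan's criterion: with `g` acting by `φ μ` on the
`μ`-part, `φ (trace (f * g)) = ∑ dim V^μ * (φ μ) ^ 2`, so a `ℚ`-linear form `φ` kills every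
eigenvalue once the trace vanishes; if this holds for all `φ` then `0` is the only eigenvalue. -/
lemma isNilpotent_of_trace {V : Type*} [AddCommGroup V] [Module ℂ V] [FiniteDimensional ℂ V]
    (f : End ℂ V) (h : ∀ (φ : ℂ →ₗ[ℚ] ℚ) (g : End ℂ V),
      (∀ μ, ∀ v ∈ f.maxGenEigenspace μ, g v = (φ μ : ℂ) • v) → LinearMap.trace ℂ V (f * g) = 0) :
    IsNilpotent f := by
  classical
  have hint : DirectSum.IsInternal f.maxGenEigenspace :=
    DirectSum.isInternal_submodule_of_iSupIndep_of_iSup_eq_top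
      (Module.End.independent_maxGenEigenspace f) (Module.End.iSup_maxGenEigenspace_eq_top f)
  have hfin : {μ | f.maxGenEigenspace μ ≠ ⊥}.Finite :=
    WellFoundedGT.finite_ne_bot_of_iSupIndep (Module.End.independent_maxGenEigenspace f)
  have hzero : ∀ μ, f.maxGenEigenspace μ ≠ ⊥ → μ = 0 := by
    intro ν hν
    rw [← Module.forall_dual_apply_eq_zero_iff ℚ]
    intro φ
    obtain ⟨g, hg⟩ := exists_end_eq_smul f (fun μ ↦ (φ μ : ℂ))
    have h1 := h φ g hg
    have hf : ∀ μ, Set.MapsTo f (f.maxGenEigenspace μ) (f.maxGenEigenspace μ) :=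
      fun μ ↦ Module.End.mapsTo_maxGenEigenspace_of_comm (Commute.refl f) μ
    have hfg : ∀ μ, Set.MapsTo (f * g) (f.maxGenEigenspace μ) (f.maxGenEigenspace μ) := by
      intro μ v hv
      rw [Module.End.mul_apply, hg μ v hv, map_smul]
      exact Submodule.smul_mem _ _ (hf μ hv)
    rw [LinearMap.trace_eq_sum_trace_restrict' hint hfin hfg] at h1
    have h2 : ∀ μ, LinearMap.trace ℂ (f.maxGenEigenspace μ) ((f * g).restrict (hfg μ)) =
        (φ μ : ℂ) * (μ * finrank ℂ (f.maxGenEigenspace μ)) := by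
      intro μ
      have e1 : (f * g).restrict (hfg μ) = (φ μ : ℂ) • f.restrict (hf μ) := by
        ext ⟨v, hv⟩
        change f (g v) = (φ μ : ℂ) • f v
        rw [hg μ v hv, map_smul]
      have hn : IsNilpotent (f.restrict (hf μ) - algebraMap ℂ _ μ) := by
        have := Module.End.isNilpotent_restrict_maxGenEigenspace_sub_algebraMap f μ
        convert! this using 1
      have e2 : LinearMap.trace ℂ _ (f.restrict (hf μ) - algebraMap ℂ _ μ) = 0 :=
        (LinearMap.isNilpotent_trace_of_isNilpotent hn).eq_zero
      rw [map_sub, sub_eq_zero, Algebra.algebraMap_eq_smul_one, map_smul,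
        LinearMap.trace_one] at e2
      rw [e1, map_smul, e2]
      simp
    have h3 : ∑ μ ∈ hfin.toFinset, φ μ * (φ μ * (finrank ℂ (f.maxGenEigenspace μ) : ℚ)) = 0 := by
      -- apply `φ` to the vanishing trace; the coefficients `φ μ * dim` are rational
      rw [← map_zero φ, ← h1, map_sum]
      refine Finset.sum_congr rfl fun μ _ ↦ ?_
      rw [h2]
      have : (φ μ : ℂ) * (μ * (finrank ℂ (f.maxGenEigenspace μ) : ℂ)) =
        (φ μ * (finrank ℂ (f.maxGenEigenspace μ) : ℚ) : ℚ) • μ := by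
        rw [Rat.smul_def]; push_cast; ring
      rw [this, map_smul, smul_eq_mul]; ring
    have h4 := (Finset.sum_eq_zero_iff_of_nonneg (fun μ _ ↦ by
      rw [← mul_assoc]; exact mul_nonneg (mul_self_nonneg _) (Nat.cast_nonneg _))).mp h3 ν
      (hfin.mem_toFinset.mpr hν)
    have h5 : (finrank ℂ (f.maxGenEigenspace ν) : ℚ) ≠ 0 := by
      simpa [Submodule.finrank_eq_zero] using hν
    simpa [h5] using h4
  rw [Module.End.isNilpotent_iff_of_finite]
  intro v
  have hv : v ∈ f.maxGenEigenspace 0 := by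
    induction v using induction_maxGenEigenspace f with
    | h0 => simp
    | hadd v w hv hw => exact add_mem hv hw
    | hp μ v hv =>
      by_cases hμ : f.maxGenEigenspace μ = ⊥
      · rw [hμ, Submodule.mem_bot] at hv
        simp [hv]
      · rwa [← hzero μ hμ]
  simpa [Module.End.mem_maxGenEigenspace] using hv

/-- `g` is the semisimple part of `f`; being diagonalizable, it has `ker (g ^ 2) = ker g = V^0`. -/
lemma mem_maxGenEigenspace_zero_of_apply_apply {V : Type*} [AddCommGroup V] [Module ℂ V]
    [FiniteDimensional ℂ V] {f g : End ℂ V} (hg : ∀ μ, ∀ v ∈ f.maxGenEigenspace μ, g v = μ • v)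
    {v : V} (hv : g (g v) = 0) : v ∈ f.maxGenEigenspace 0 := by
  -- `P` projects onto `V^0` and `h` inverts `g ^ 2` on the other generalized eigenspaces
  obtain ⟨P, hP⟩ := exists_end_eq_smul f (fun μ ↦ if μ = 0 then 1 else 0)
  obtain ⟨h, hh⟩ := exists_end_eq_smul f (fun μ ↦ μ⁻¹ * μ⁻¹)
  have h1 : ∀ w, h (g (g w)) + P w = w := by
    intro w
    induction w using induction_maxGenEigenspace f with
    | h0 => simp
    | hadd v w hv hw =>
      simp only [map_add]
      nth_rewrite 3 [← hv]
      nth_rewrite 3 [← hw]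
      abel
    | hp μ w hw =>
      rw [hg μ w hw, map_smul, hg μ w hw, map_smul, map_smul, hh μ w hw, hP μ w hw]
      by_cases hμ : μ = 0
      · simp [hμ]
      · simp [hμ, smul_smul]
  have h2 : ∀ w, P w ∈ f.maxGenEigenspace 0 := by
    intro w
    induction w using induction_maxGenEigenspace f with
    | h0 => simp
    | hadd v w hv hw => rw [map_add]; exact add_mem hv hw
    | hp μ w hw =>
      rw [hP μ w hw]
      by_cases hμ : μ = 0
      · subst hμ; exact Submodule.smul_mem _ _ hw
      · simp [hμ]
  rw [← h1 v, hv, map_zero, zero_add]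
  exact h2 v

/-! ### Subalgebras and the Killing form -/

variable {L : Type*} [LieRing L] [LieAlgebra ℂ L]

lemma isNilpotent_map {q : LieSubalgebra ℂ L} (h : LieSubalgebra ℂ q) [LieRing.IsNilpotent h] :
    LieRing.IsNilpotent (h.map q.incl) := by
  let f : h →ₗ⁅ℂ⁆ h.map q.incl :=
    { toFun := fun x ↦ ⟨x.1.1, x.1, x.2, rfl⟩
      map_add' := fun _ _ ↦ rfl
      map_smul' := fun _ _ ↦ rfl
      map_lie' := rfl }
  refine Function.Surjective.lieAlgebra_isNilpotent (R := ℂ) (f := f) ?_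
  rintro ⟨_, x, hx, rfl⟩
  exact ⟨⟨x, hx⟩, rfl⟩

lemma killingForm_eq_zero_of_isNilpotent_mul {x y : L}
    (h : IsNilpotent (ad ℂ L x * ad ℂ L y)) : killingForm ℂ L x y = 0 := by
  rw [killingForm_apply_apply]
  exact (LinearMap.isNilpotent_trace_of_isNilpotent h).eq_zero

lemma coe_ad_pow_apply {q : LieSubalgebra ℂ L} (z v : q) (k : ℕ) :
    (((ad ℂ q z) ^ k) v : L) = ((ad ℂ L z) ^ k) v := by
  induction k with
  | zero => simp
  | succ k ih => rw [pow_succ', pow_succ', Module.End.mul_apply, Module.End.mul_apply, ← ih]; rfl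

/-- The radical of the Killing form of `L` restricted to `q`. -/
def killingRadical (q : LieSubalgebra ℂ L) : LieSubalgebra ℂ L where
  carrier := {x | x ∈ q ∧ ∀ y ∈ q, killingForm ℂ L y x = 0}
  add_mem' := fun {a b} ha hb ↦ ⟨q.add_mem ha.1 hb.1, fun y hy ↦ by
    rw [map_add, ha.2 y hy, hb.2 y hy, add_zero]⟩
  zero_mem' := ⟨q.zero_mem, fun y _ ↦ map_zero _⟩
  smul_mem' := fun t {a} ha ↦ ⟨q.smul_mem t ha.1, fun y hy ↦ by
    rw [map_smul, ha.2 y hy, smul_zero]⟩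
  lie_mem' := fun {a b} ha hb ↦ ⟨q.lie_mem ha.1 hb.1, fun y hy ↦ by
    rw [← LieModule.traceForm_apply_lie_apply]
    exact hb.2 _ (q.lie_mem hy ha.1)⟩

lemma le_normalizer_killingRadical (q : LieSubalgebra ℂ L) : q ≤ (killingRadical q).normalizer := by
  intro x hx
  rw [LieSubalgebra.mem_normalizer_iff]
  rintro y ⟨hy, hy'⟩
  refine ⟨q.lie_mem hx hy, fun w hw ↦ ?_⟩
  rw [← LieModule.traceForm_apply_lie_apply]
  exact hy' _ (q.lie_mem hw hx)

variable [FiniteDimensional ℂ L]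

/-- If `φ` is additive, the operator with scalar `φ μ` on the generalized eigenspaces of `ad x` is a
derivation, since `⁅L^μ, L^ν⁆ ⊆ L^(μ+ν)`; derivations of `L` are inner. For `φ = id` the element
`d` is the semisimple part of `x`. -/
lemma exists_lie_eq_smul [IsKilling ℂ L] (x : L) (φ : ℂ →+ ℂ) :
    ∃ d : L, ∀ μ, ∀ v ∈ (ad ℂ L x).maxGenEigenspace μ, ⁅d, v⁆ = φ μ • v := by
  obtain ⟨D, hD⟩ := exists_end_eq_smul (ad ℂ L x) φ
  have key : ∀ v w : L, D ⁅v, w⁆ = ⁅v, D w⁆ - ⁅w, D v⁆ := by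
    intro v w
    induction v using induction_maxGenEigenspace (ad ℂ L x) with
    | h0 => simp
    | hadd v v' hv hv' => simp only [add_lie, map_add, hv, hv', lie_add]; abel
    | hp μ v hv =>
      induction w using induction_maxGenEigenspace (ad ℂ L x) with
      | h0 => simp
      | hadd v v' hv hv' => simp only [add_lie, map_add, hv, hv', lie_add]; abel
      | hp ν w hw =>
        have h : ⁅v, w⁆ ∈ (ad ℂ L x).maxGenEigenspace (μ + ν) :=
          LieModule.lie_mem_maxGenEigenspace_toEnd hv hw
        rw [hD _ _ hv, hD _ _ hw, hD _ _ h, map_add, lie_smul, lie_smul, ← lie_skew v w]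
        module
  obtain ⟨d, hd⟩ := LieDerivation.IsKilling.exists_eq_ad (⟨D, key⟩ : LieDerivation ℂ L L)
  refine ⟨d, fun μ v hv ↦ ?_⟩
  rw [← hD _ _ hv]
  rw [← LieDerivation.ad_apply_apply (R := ℂ), hd]
  rfl

/-! ### Engel subalgebras are regular -/

lemma engel_ne_top {x : L} (hx : ¬ IsNilpotent (ad ℂ L x)) : LieSubalgebra.engel ℂ x ≠ ⊤ := by
  intro h
  apply hx
  rw [Module.End.isNilpotent_iff_of_finite]
  intro v
  have : v ∈ LieSubalgebra.engel ℂ x := h ▸ LieSubalgebra.mem_top v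
  exact (LieSubalgebra.mem_engel_iff ℂ x v).mp this

/-- A Cartan subalgebra of `engel x` is already a Cartan subalgebra of `L`: it contains the
semisimple part `d` of `x`, and any element normalizing it must commute with `d`, hence lies
in `engel x`. -/
lemma isRegular_engel [IsKilling ℂ L] (x : L) :
    (LieSubalgebra.engel ℂ x).IsRegularSubalgebra := by
  set q := LieSubalgebra.engel ℂ x with hq
  obtain ⟨z, hz⟩ := LieAlgebra.exists_isCartanSubalgebra_engel (K := ℂ) (L := q)
  set h := LieSubalgebra.engel ℂ z
  have hnil := hz.nilpotent
  obtain ⟨d, hd⟩ := exists_lie_eq_smul x (AddMonoidHom.id ℂ)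
  have hdq : ∀ v ∈ q, ⁅d, v⁆ = 0 := fun v hv ↦ by rw [hd 0 v hv]; simp
  have hd' : d ∈ q := by
    rw [hq, LieSubalgebra.mem_engel_iff]
    refine ⟨1, ?_⟩
    rw [pow_one, ad_apply, ← lie_skew, hdq x (LieSubalgebra.self_mem_engel ℂ x), neg_zero]
  -- `d` centralizes `q`, and a Cartan subalgebra contains the centre
  have hdh : (⟨d, hd'⟩ : q) ∈ h := by
    rw [← hz.self_normalizing, LieSubalgebra.mem_normalizer_iff]
    intro y hy
    have : ⁅(⟨d, hd'⟩ : q), y⁆ = 0 := Subtype.ext (hdq y y.2)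
    rw [this]; exact zero_mem _
  refine ⟨h.map q.incl, ⟨isNilpotent_map h, le_antisymm ?_ (LieSubalgebra.le_normalizer _)⟩, ?_⟩
  · intro Y hY
    rw [LieSubalgebra.mem_normalizer_iff'] at hY
    -- `⁅d, Y⁆ ∈ q` is killed by `d`
    have hYq : Y ∈ q := by
      obtain ⟨w, hw, hw'⟩ := hY d ⟨_, hdh, rfl⟩
      refine mem_maxGenEigenspace_zero_of_apply_apply (f := ad ℂ L x) (g := ad ℂ L d) hd ?_
      rw [ad_apply, ad_apply, ← hw']
      exact hdq _ w.2
    refine ⟨⟨Y, hYq⟩, ?_, rfl⟩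
    rw [← hz.self_normalizing]
    change _ ∈ h.normalizer
    rw [LieSubalgebra.mem_normalizer_iff']
    intro y hy
    obtain ⟨w, hw, hw'⟩ := hY y ⟨y, hy, rfl⟩
    have : w = ⁅y, ⟨Y, hYq⟩⁆ := Subtype.ext hw'
    exact this ▸ hw
  · rintro _ ⟨w, _, rfl⟩ y hy
    exact q.lie_mem w.2 hy

/-! ### Subalgebras orthogonal to an ideal of nilpotent elements -/

/-- `H + ℂ Y` is solvable because `H` is a nilpotent ideal of it with abelian quotient; hence
`ad Y * ad c` is nilpotent. -/
lemma killingForm_eq_zero_of_normalizes_of_normalizer {H : LieSubalgebra ℂ L}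
    [LieRing.IsNilpotent H] {Y : L} (hY : Y ∈ H.normalizer) {c : L} (hc : c ∈ H)
    (hnil : IsNilpotent (ad ℂ L c)) : killingForm ℂ L Y c = 0 := by
  let b : LieSubalgebra ℂ L :=
    { (ℂ ∙ Y) ⊔ H.toSubmodule with
      lie_mem' := fun hy hz ↦ LieSubalgebra.lie_mem_sup_of_mem_normalizer hY hy hz }
  have hHb : H ≤ b := fun x hx ↦ (le_sup_right : H.toSubmodule ≤ (ℂ ∙ Y) ⊔ H.toSubmodule) hx
  have hYb : Y ∈ b := Submodule.mem_sup_left (Submodule.mem_span_singleton_self Y)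
  have hbn : b ≤ H.normalizer := by
    intro x hx
    have : (ℂ ∙ Y) ⊔ H.toSubmodule ≤ H.normalizer.toSubmodule :=
      sup_le ((Submodule.span_singleton_le_iff_mem _ _).mpr hY) H.le_normalizer
    exact this hx
  obtain ⟨J, hJ⟩ := LieSubalgebra.exists_nested_lieIdeal_ofLe_normalizer hHb hbn
  have hJm : ∀ x : b, x ∈ J ↔ (x : L) ∈ H := by
    intro x
    have : x ∈ (J : LieSubalgebra ℂ b) ↔ x ∈ LieSubalgebra.ofLe hHb := by rw [hJ]
    rw [LieSubalgebra.mem_ofLe] at this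
    exact this
  have : IsSolvable J := by
    let f : J →ₗ⁅ℂ⁆ H :=
      { toFun := fun x ↦ ⟨x.1.1, (hJm _).mp x.2⟩
        map_add' := fun _ _ ↦ rfl
        map_smul' := fun _ _ ↦ rfl
        map_lie' := rfl }
    have hf : Function.Injective f := fun x y h ↦
      Subtype.ext (Subtype.ext (congrArg (fun u : H ↦ (u : L)) h))
    exact hf.lieAlgebra_isSolvable
  have : IsSolvable b := by
    refine isSolvable_of_lie_mem J fun x y ↦ ?_
    rw [hJm]
    obtain ⟨x, hx⟩ := x
    obtain ⟨y, hy⟩ := y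
    obtain ⟨x1, hx1, u, hu, rfl⟩ := Submodule.mem_sup.mp hx
    obtain ⟨y1, hy1, v, hv, rfl⟩ := Submodule.mem_sup.mp hy
    obtain ⟨t, rfl⟩ := Submodule.mem_span_singleton.mp hx1
    obtain ⟨s, rfl⟩ := Submodule.mem_span_singleton.mp hy1
    change ⁅t • Y + u, s • Y + v⁆ ∈ H
    simp only [smul_lie, add_lie, zero_add, lie_add, smul_zero, lie_smul, lie_self]
    refine H.add_mem (H.smul_mem s ?_) (H.add_mem (H.smul_mem t ?_) (H.lie_mem hu hv))
    exacts [(H.mem_normalizer_iff' Y).mp hY u hu, (H.mem_normalizer_iff Y).mp hY v hv]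
  exact killingForm_eq_zero_of_isNilpotent_mul
    (isNilpotent_toEnd_mul (V := L) (⟨c, hHb hc⟩ : b) ⟨Y, hYb⟩ _ rfl hnil)

/-- If `N` is an ideal of `q` made of `ad`-nilpotent elements and `q`, `N` are orthogonal
complements of each other for the Killing form (as for a parabolic subalgebra and its nilradical),
then a Cartan subalgebra `H = engel_q z` of `q` is a Cartan subalgebra of `L`. The point is that
`Z = engel_L z` is contained in `q`: otherwise some `Y ∈ Z` outside `q` is an eigenvector of `H`
modulo `H`, and one checks that `Y` is orthogonal to `N`. -/
lemma isRegular_of_orthogonal [IsKilling ℂ L] {q N : LieSubalgebra ℂ L}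
    (hNq : N ≤ q) (hn : q ≤ N.normalizer) (hnil : ∀ x ∈ N, IsNilpotent (ad ℂ L x))
    (h1 : ∀ w ∈ N, ∀ y ∈ q, killingForm ℂ L y w = 0)
    (h2 : ∀ Y, (∀ w ∈ N, killingForm ℂ L Y w = 0) → Y ∈ q) : q.IsRegularSubalgebra := by
  obtain ⟨z, hz⟩ := LieAlgebra.exists_isCartanSubalgebra_engel (K := ℂ) (L := q)
  set Z := LieSubalgebra.engel ℂ (z : L) with hZ
  have hnilh := hz.nilpotent
  set H := (LieSubalgebra.engel ℂ z).map q.incl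
  have hHnil : LieRing.IsNilpotent H := isNilpotent_map _
  -- `H = q ⊓ Z`
  have hHm : ∀ v, v ∈ H ↔ v ∈ q ∧ v ∈ Z := by
    intro v
    constructor
    · rintro ⟨w, hw, rfl⟩
      refine ⟨w.2, ?_⟩
      obtain ⟨k, hk⟩ := (LieSubalgebra.mem_engel_iff ℂ _ _).mp hw
      refine (LieSubalgebra.mem_engel_iff ℂ _ _).mpr ⟨k, ?_⟩
      change ((ad ℂ L z) ^ k) (w : L) = 0
      rw [← coe_ad_pow_apply, hk]; rfl
    · rintro ⟨hv, hvZ⟩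
      refine ⟨⟨v, hv⟩, ?_, rfl⟩
      obtain ⟨k, hk⟩ := (LieSubalgebra.mem_engel_iff ℂ _ _).mp hvZ
      refine (LieSubalgebra.mem_engel_iff ℂ _ _).mpr ⟨k, Subtype.ext ?_⟩
      rw [coe_ad_pow_apply, hk]; rfl
  have hNbr : ∀ w ∈ q, ∀ c ∈ N, ⁅w, c⁆ ∈ N := fun w hw c hc ↦
    LieSubalgebra.ideal_in_normalizer (hn hw) hc
  have hZq : Z ≤ q := by
    by_contra hcon
    let B : LieSubmodule ℂ H L :=
      { Z.toSubmodule with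
        lie_mem := fun {x m} hm ↦ Z.lie_mem ((hHm _).mp x.2).2 hm }
    have hB : ¬ B ≤ H.toLieSubmodule := fun h ↦ hcon fun v hv ↦
      ((hHm v).mp (h (show v ∈ B from hv))).1
    obtain ⟨Y, hYZ, hYH, χ, hχ⟩ := exists_weightVector_mod hB
    replace hYZ : Y ∈ Z := hYZ
    replace hYH : Y ∉ H := hYH
    replace hχ : ∀ x : H, ⁅(x : L), Y⁆ - χ x • Y ∈ H := hχ
    have hYq : Y ∉ q := fun h ↦ hYH ((hHm Y).mpr ⟨h, hYZ⟩)
    -- `Y` is orthogonal to `H ⊓ N`. If the weight `χ` is zero then `Y` normalizes `H`. If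
    -- `χ w ≠ 0`, invariance of `κ` and `κ (q, N) = 0` give `χ w * κ (Y, c) = - κ (Y, ⁅w, c⁆)`, and `ad w` is
    -- nilpotent on `H`.
    have hzero : ∀ c ∈ H, c ∈ N → killingForm ℂ L Y c = 0 := by
      by_cases hex : ∃ w, χ w ≠ 0
      · obtain ⟨w, hw⟩ := hex
        have key : ∀ k : ℕ, ∀ c ∈ H, c ∈ N → ((ad ℂ L w) ^ k) c = 0 →
            killingForm ℂ L Y c = 0 := by
          intro k
          induction k with
          | zero => intro c _ _ h; rw [pow_zero, Module.End.one_apply] at h; simp [h]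
          | succ k ih =>
            intro c hcH hcN hc
            have e1 := ih ⁅(w : L), c⁆ (H.lie_mem w.2 hcH)
              (hNbr w ((hHm _).mp w.2).1 c hcN) (by rwa [pow_succ] at hc)
            have e2 := h1 c hcN _ ((hHm _).mp (hχ w)).1
            rw [map_sub, LinearMap.sub_apply, map_smul, LinearMap.smul_apply,
              LieModule.traceForm_apply_lie_apply' ℂ L L, e1, neg_zero, zero_sub, neg_eq_zero,
              smul_eq_mul] at e2
            exact (mul_eq_zero.mp e2).resolve_left hw
        intro c hcH hcN
        obtain ⟨k, hk⟩ := LieModule.isNilpotent_toEnd_of_isNilpotent ℂ H H w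
        refine key k c hcH hcN ?_
        have := coe_ad_pow_apply w ⟨c, hcH⟩ k
        rw [← this]
        change (((LieModule.toEnd ℂ H H w) ^ k) ⟨c, hcH⟩ : L) = 0
        rw [hk]; rfl
      · push Not at hex
        have hYn : Y ∈ H.normalizer := by
          rw [LieSubalgebra.mem_normalizer_iff']
          intro w hw
          simpa [hex] using hχ ⟨w, hw⟩
        exact fun c hcH hcN ↦
          killingForm_eq_zero_of_normalizes_of_normalizer hYn hcH (hnil c hcN)
    apply hYq
    apply h2
    intro w hw
    -- decompose `N` under `ad z`: the zero part lies in `H ⊓ N`, and the other parts are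
    -- orthogonal to `Y ∈ L^0` by invariance under the semisimple part `d` of `z`
    have hdec := Submodule.eq_iSup_inf_genEigenspace (f := ad ℂ L z) (p := N.toSubmodule) ⊤
      (fun v hv ↦ hNbr z z.2 v hv) (Module.End.iSup_maxGenEigenspace_eq_top _)
    have hw' : w ∈ N.toSubmodule := hw
    rw [hdec] at hw'
    obtain ⟨d, hd⟩ := exists_lie_eq_smul (z : L) (AddMonoidHom.id ℂ)
    have hdY : ⁅d, Y⁆ = 0 := by rw [hd 0 Y hYZ]; simp
    refine Submodule.iSup_induction _ (motive := fun w ↦ killingForm ℂ L Y w = 0) hw' ?_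
      (by simp) (fun a b ha hb ↦ by rw [map_add, ha, hb, add_zero])
    rintro μ v ⟨hvN, hvμ⟩
    by_cases hμ : μ = 0
    · subst hμ
      exact hzero v ((hHm v).mpr ⟨hNq hvN, hvμ⟩) hvN
    · have := LieModule.traceForm_apply_lie_apply' ℂ L L d Y v
      rw [hdY, map_zero, LinearMap.zero_apply, hd μ v hvμ, map_smul, eq_comm, neg_eq_zero,
        smul_eq_mul] at this
      exact (mul_eq_zero.mp this).resolve_left hμ
  have hHZ : H = Z := by
    ext v
    rw [hHm]
    exact ⟨fun h ↦ h.2, fun h ↦ ⟨hZq h, h⟩⟩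
  refine ⟨H, ⟨hHnil, ?_⟩, fun x hx y hy ↦ q.lie_mem ((hHm x).mp hx).1 hy⟩
  rw [hHZ]
  exact LieSubalgebra.normalizer_engel ℂ _

/-! ### Maximal subalgebras with an ideal of nilpotent elements -/

/-- `n` is a nonzero ideal of `q` all of whose elements are `ad`-nilpotent on the ambient `L`. -/
structure IsNilIdeal (n q : LieSubalgebra ℂ L) : Prop where
  ne_bot : n ≠ ⊥
  le : n ≤ q
  le_normalizer : q ≤ n.normalizer
  isNilpotent_ad : ∀ x ∈ n, IsNilpotent (ad ℂ L x)

lemma IsNilIdeal.killingForm_eq_zero {n q : LieSubalgebra ℂ L} (h : IsNilIdeal n q) {x y : L}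
    (hx : x ∈ n) (hy : y ∈ q) : killingForm ℂ L y x = 0 := by
  obtain ⟨I, hI⟩ := LieSubalgebra.exists_nested_lieIdeal_ofLe_normalizer h.le h.le_normalizer
  have hIm : ∀ x : q, x ∈ I ↔ (x : L) ∈ n := by
    intro x
    have : x ∈ (I : LieSubalgebra ℂ q) ↔ x ∈ LieSubalgebra.ofLe h.le := by rw [hI]
    rw [LieSubalgebra.mem_ofLe] at this
    exact this
  exact killingForm_eq_zero_of_isNilpotent_mul
    (isNilpotent_toEnd_mul_of_ideal (V := L) I
      (fun y hy ↦ h.isNilpotent_ad y ((hIm y).mp hy)) (⟨y, hy⟩ : q) (y := ⟨x, h.le hx⟩)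
      ((hIm _).mpr hx))

/-- Each element `d` with `ad d` acting by `φ μ` on the `μ`-part of `ad x` preserves every
`ad x`-stable subspace, so it normalizes `n`, and the trace criterion applies to `x`. -/
lemma isNilpotent_ad_of_orthogonal_normalizer [IsKilling ℂ L] {n : LieSubalgebra ℂ L} {x : L}
    (hx : x ∈ n.normalizer) (h : ∀ d ∈ n.normalizer, killingForm ℂ L d x = 0) :
    IsNilpotent (ad ℂ L x) := by
  refine isNilpotent_of_trace _ fun φ g hg ↦ ?_
  obtain ⟨d, hd⟩ := exists_lie_eq_smul x
    (((algebraMap ℚ ℂ : ℚ →+* ℂ) : ℚ →+ ℂ).comp (φ : ℂ →+ ℚ))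
  have hgd : g = ad ℂ L d := by
    ext v
    induction v using induction_maxGenEigenspace (ad ℂ L x) with
    | h0 => simp
    | hadd v w hv hw => rw [map_add, map_add, hv, hw]
    | hp μ v hv => rw [hg μ v hv, ad_apply, hd μ v hv]; rfl
  have hdn : d ∈ n.normalizer := by
    rw [LieSubalgebra.mem_normalizer_iff]
    intro y hy
    exact apply_mem_of_stable (f := ad ℂ L x) (g := ad ℂ L d) hd (W := n.toSubmodule)
      (fun v hv ↦ (LieSubalgebra.mem_normalizer_iff n x).mp hx v hv) hy
  have := h d hdn
  rw [LieModule.traceForm_comm, killingForm_apply_apply] at this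
  rw [hgd]
  exact this

/-- The hypothesis `hmax` is what maximality of `q` among the subalgebras with a nonzero ideal of
`ad`-nilpotent elements provides. It forces the radical `N` of the Killing form restricted to `q`
to consist of `ad`-nilpotent elements, and then the whole orthogonal of `q` to be `N`. -/
lemma isRegular_of_maximal [IsKilling ℂ L] {n q : LieSubalgebra ℂ L} (h : IsNilIdeal n q)
    (hmax : ∀ n', IsNilIdeal n' q → n'.normalizer = q) : q.IsRegularSubalgebra ∧ q ≠ ⊤ := by
  have hnd := LieAlgebra.IsKilling.killingForm_nondegenerate ℂ L
  have hrefl : (killingForm ℂ L).IsRefl := (LieModule.traceForm_isSymm ℂ L L).isRefl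
  have hnN : n ≤ killingRadical q := fun x hx ↦ ⟨h.le hx, fun y hy ↦ h.killingForm_eq_zero hx hy⟩
  have hN : IsNilIdeal (killingRadical q) q :=
    { ne_bot := fun hbot ↦ h.ne_bot (le_bot_iff.mp (hbot ▸ hnN))
      le := fun x hx ↦ hx.1
      le_normalizer := le_normalizer_killingRadical q
      isNilpotent_ad := fun x hx ↦ by
        have hq := hmax n h
        refine isNilpotent_ad_of_orthogonal_normalizer (n := n) ?_ ?_
        · rw [hq]; exact hx.1
        · rw [hq]; exact hx.2 }
  have hNq := hmax _ hN
  set N := killingRadical q with hNdef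
  -- an element of the orthogonal of `q` outside `N` yields one which `N` moves into `N`, hence
  -- one in `N.normalizer = q`
  have horth : ∀ x, (∀ y ∈ q, killingForm ℂ L y x = 0) → x ∈ N := by
    by_contra! hcon
    obtain ⟨x, hx, hxN⟩ := hcon
    have hnilN : LieRing.IsNilpotent N := by
      rw [LieAlgebra.isNilpotent_iff_forall (R := ℂ)]
      intro y
      exact N.isNilpotent_ad_of_isNilpotent_ad (hN.isNilpotent_ad y y.2)
    let B : LieSubmodule ℂ N L :=
      { (killingForm ℂ L).orthogonal q.toSubmodule with
        lie_mem := by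
          intro w m hm y hy
          change killingForm ℂ L y ⁅(w : L), m⁆ = 0
          rw [← LieModule.traceForm_apply_lie_apply]
          exact hm _ (q.lie_mem hy (hN.le w.2)) }
    have hB : ¬ B ≤ N.toLieSubmodule := fun hle ↦ hxN (hle (show x ∈ B from hx))
    obtain ⟨v, hvB, hvN, χ, hχ⟩ := exists_weightVector_mod hB
    replace hvB : ∀ y ∈ q, killingForm ℂ L y v = 0 := hvB
    replace hvN : v ∉ N := hvN
    replace hχ : ∀ x : N, ⁅(x : L), v⁆ - χ x • v ∈ N := hχ
    have hbr : ∀ w ∈ N, ⁅w, v⁆ ∈ N := by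
      intro w hw
      -- `ad w` is nilpotent, so its eigenvalue `χ w` on `v` modulo `N` vanishes
      have hpow : ∀ k : ℕ, ((ad ℂ L w) ^ k) v - χ ⟨w, hw⟩ ^ k • v ∈ N := by
        intro k
        induction k with
        | zero => simp
        | succ k ih =>
          have e1 := N.lie_mem hw ih
          have e2 := N.smul_mem (χ ⟨w, hw⟩ ^ k) (hχ ⟨w, hw⟩)
          have e3 := N.add_mem e1 e2
          rw [pow_succ', Module.End.mul_apply, ad_apply]
          convert e3 using 1
          rw [lie_sub, lie_smul, smul_sub, smul_smul, pow_succ]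
          abel
      obtain ⟨k, hk⟩ := hN.isNilpotent_ad w hw
      have h3 := hpow k
      rw [hk, LinearMap.zero_apply, zero_sub, neg_mem_iff] at h3
      have h4 : χ ⟨w, hw⟩ = 0 := by
        by_contra h0
        apply hvN
        have := N.smul_mem ((χ ⟨w, hw⟩ ^ k)⁻¹) h3
        rwa [smul_smul, inv_mul_cancel₀ (pow_ne_zero k h0), one_smul] at this
      simpa [h4] using hχ ⟨w, hw⟩
    have hvq : v ∈ q := by
      rw [← hNq, LieSubalgebra.mem_normalizer_iff']
      exact hbr
    exact hvN ⟨hvq, hvB⟩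
  constructor
  · refine isRegular_of_orthogonal hN.le hN.le_normalizer hN.isNilpotent_ad
      (fun w hw ↦ hw.2) fun Y hY ↦ ?_
    have hoo := LinearMap.BilinForm.orthogonal_orthogonal hnd hrefl q.toSubmodule
    have : Y ∈ q.toSubmodule := by
      rw [← hoo]
      intro w hw
      exact (LieModule.traceForm_comm ℂ L L w Y).trans (hY w (horth w hw))
    exact this
  · rintro rfl
    apply h.ne_bot
    rw [eq_bot_iff]
    intro x hx
    rw [LieSubalgebra.mem_bot]
    exact hnd.2 x fun y ↦ h.killingForm_eq_zero hx (LieSubalgebra.mem_top y)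

lemma isRSubalgebra_of_isNilIdeal [IsKilling ℂ L] {n a : LieSubalgebra ℂ L} (h : IsNilIdeal n a) :
    a.IsRSubalgebra := by
  obtain ⟨q, ⟨haq, n', hn'⟩, hq⟩ := WellFounded.has_min
    (wellFounded_gt (α := LieSubalgebra ℂ L)) {q | a ≤ q ∧ ∃ n', IsNilIdeal n' q} ⟨a, le_rfl, n, h⟩
  have hmax : ∀ m, IsNilIdeal m q → m.normalizer = q := by
    intro m hm
    by_contra hne
    refine hq m.normalizer ⟨haq.trans hm.le_normalizer, m,
      ⟨hm.ne_bot, m.le_normalizer, le_rfl, hm.isNilpotent_ad⟩⟩ ?_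
    exact lt_of_le_of_ne hm.le_normalizer (Ne.symm hne)
  obtain ⟨h1, h2⟩ := isRegular_of_maximal hn' hmax
  exact ⟨q, h1, h2, haq⟩

/-! ### Non-semisimple subalgebras -/

/-- The dichotomy is whether a nonzero abelian ideal `I` of `a` consists of `ad`-nilpotent
elements. -/
lemma isRSubalgebra_of_not_isSemisimple [IsKilling ℂ L] {a : LieSubalgebra ℂ L}
    (ha : ¬ LieAlgebra.IsSemisimple ℂ a) : a.IsRSubalgebra := by
  have hrad : ¬ LieAlgebra.HasTrivialRadical ℂ a := fun h ↦ ha inferInstance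
  rw [LieAlgebra.hasTrivialRadical_iff_no_abelian_ideals] at hrad
  push Not at hrad
  obtain ⟨I, hab, hI⟩ := hrad
  have hI0 : ∀ x ∈ I, ∀ y ∈ I, ⁅x, y⁆ = 0 := fun x hx y hy ↦
    congrArg Subtype.val (hab.trivial ⟨x, hx⟩ ⟨y, hy⟩)
  by_cases hnil : ∀ x ∈ I, IsNilpotent (ad ℂ L (x : L))
  · refine isRSubalgebra_of_isNilIdeal (n := (I : LieSubalgebra ℂ a).map a.incl) ⟨?_, ?_, ?_, ?_⟩
    · intro hbot
      apply hI
      rw [LieSubmodule.eq_bot_iff]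
      intro x hx
      have : (x : L) ∈ (I : LieSubalgebra ℂ a).map a.incl := ⟨x, hx, rfl⟩
      rw [hbot, LieSubalgebra.mem_bot] at this
      exact Subtype.ext this
    · rintro _ ⟨x, _, rfl⟩
      exact x.2
    · intro x hx
      rw [LieSubalgebra.mem_normalizer_iff]
      rintro _ ⟨y, hy, rfl⟩
      exact ⟨⁅(⟨x, hx⟩ : a), y⁆, I.lie_mem hy, rfl⟩
    · rintro _ ⟨x, hx, rfl⟩
      exact hnil x hx
  · push Not at hnil
    obtain ⟨x, hx, hxn⟩ := hnil
    -- `(ad x) ^ 2` maps `a` to `⁅I, I⁆ = 0`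
    refine ⟨LieSubalgebra.engel ℂ (x : L), isRegular_engel _, engel_ne_top hxn, fun y hy ↦ ?_⟩
    refine (LieSubalgebra.mem_engel_iff ℂ _ _).mpr ⟨2, ?_⟩
    have h1 : ⁅x, (⟨y, hy⟩ : a)⁆ ∈ I := lie_mem_left ℂ a I x ⟨y, hy⟩ hx
    have h2 := hI0 x hx _ h1
    rw [pow_two, Module.End.mul_apply]
    exact congrArg Subtype.val h2

end RSub

theorem nonSemisimple_subalgebra_isRSubalgebra_and_sSubalgebra_isSemisimple
    {L : Type*} [LieRing L] [LieAlgebra ℂ L] [FiniteDimensional ℂ L]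
    [LieAlgebra.IsSemisimple ℂ L] :
    (∀ a : LieSubalgebra ℂ L, ¬ LieAlgebra.IsSemisimple ℂ a → a.IsRSubalgebra) ∧
    (∀ a : LieSubalgebra ℂ L, a.IsSSubalgebra → LieAlgebra.IsSemisimple ℂ a) := by
  have key : ∀ a : LieSubalgebra ℂ L, ¬ LieAlgebra.IsSemisimple ℂ a → a.IsRSubalgebra :=
    fun a ha ↦ RSub.isRSubalgebra_of_not_isSemisimple ha
  exact ⟨key, fun a ha ↦ by_contra fun h ↦ ha (key a h)⟩
end

section
/- Let 𝔤ᶜ be a complex simple Lie algebra and α a simple root with coefficient n_α in the highest root. Then the subalgebra 𝔤ᶜ(α) is a maximal subalgebra of 𝔤ᶜ if and only if n_α is a prime number. -/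
/-!
Write the *level* of a root for its coefficient at the simple root `α`, and `N = n_α` for the level
of the highest root `δ`. Every subalgebra `s` containing `𝔤(α)` contains the Cartan subalgebra
(`cartan_le`: the elements of `H` dual to `Δ ∖ {α}` and `δ` span it), hence is determined by the set
`Ψ` of roots whose root spaces it contains (`le_of_rootSpaceOf_le`). As `[L_β, L_γ] = L_{β + γ}`
whenever `β`, `γ`, `β + γ` are roots (`rootSpaceOf_add_le`), `Ψ` is closed under those sums of its
elements that are roots, and it contains `±γ` for `γ ∈ Δ ∖ {α}` and `±δ`
(`closedSet_of_subalgebra`).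

The key point is that such a `Ψ` is a union of full levels (`ClosedSet.level`), and more precisely
that the levels which occur are a union of classes modulo `N` which contains `0` and is closed
under addition (`ClosedSet.residue`, `ClosedSet.residue_add`). All of this rests on one averaging
argument (`LeviStable.exists_pos`). If a set of roots of positive level is stable under adding and
subtracting simple roots other than `α`, the sum of its elements is invariant under the
corresponding reflections, so it is orthogonal to `Δ ∖ {α}`; since it has positive level, it is a
positive multiple of the fundamental coweight direction. Two such sums have positive inner product,
so two such sets contain roots `x`, `y` at an acute angle, and `x - y` is a root or zero. Applied to
the roots of a level inside and outside `Ψ` this gives fullness of levels; applied to two different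
levels `0 < i < k` it produces roots of levels `i`, `k - i` whose sum is a root of level `k`.

If `N` is prime, `Ψ` consists either of the roots of level divisible by `N`, which is the case for
`𝔤(α)` itself, or of all roots (`ClosedSet.mem_of_dvd`, `ClosedSet.eq_of_prime`); so `𝔤(α)` is
maximal. If `N = 1`, it is everything. If `1 < c < N` divides `N`, the subalgebra spanned by
`H` and the root spaces of level divisible by `c`, realized as the sum of the eigenspaces of
`ad h` with eigenvalue in `cℤ` for the `h ∈ H` that computes the level (`gradedSubalgebra`), is
proper and strictly larger than `𝔤(α)`, because level `c` occurs (`ClosedSet.exists_level_le`).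
-/

/-!
STATEMENT 1: Let 𝔤ᶜ be a complex simple Lie algebra and α a simple root with coefficient n_α in
the highest root δ = Σ_{β∈Δ} n_β β.  Then the subalgebra 𝔤ᶜ(α) (generated by the root vectors
e_β, f_β for β ∈ Δ∖{α} together with e_δ, f_δ) is a maximal subalgebra of 𝔤ᶜ if and only if
n_α is a prime number.
-/

variable {L : Type*} [LieRing L] [LieAlgebra ℂ L]

/-- The root space of a linear functional `α` on a Cartan subalgebra `H`:
the simultaneous eigenspace `{x | ∀ h ∈ H, ⁅h, x⁆ = α(h) • x}`. -/
def rootSpaceOf (H : LieSubalgebra ℂ L) (α : Module.Dual ℂ H) : Submodule ℂ L where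
  carrier := {x | ∀ h : H, ⁅(h : L), x⁆ = α h • x}
  add_mem' := by intro a b ha hb h; rw [lie_add, ha h, hb h, smul_add]
  zero_mem' := by intro h; simp
  smul_mem' := by intro c a ha h; rw [lie_smul, ha h, smul_comm]

/-- `α` is a root of `L` relative to the Cartan subalgebra `H`. -/
def IsRootOf (H : LieSubalgebra ℂ L) (α : Module.Dual ℂ H) : Prop :=
  α ≠ 0 ∧ rootSpaceOf H α ≠ ⊥

/-- A maximal subalgebra: a proper subalgebra not properly contained in any other proper
subalgebra. -/
def IsMaxSubalgebra (m : LieSubalgebra ℂ L) : Prop :=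
  m ≠ ⊤ ∧ ∀ s : LieSubalgebra ℂ L, s ≠ ⊤ → m ≤ s → s = m

/-! ### Roots in simple-root coordinates -/

/-- A root system with a chosen base, in coordinates: the root lattice is `D → ℤ`, the simple
roots are the standard basis vectors, and `B` is an invariant positive definite form. The
conditions on `B` and on `R` are those consequences of the root system axioms which are used
below (`string` says that the part of the `g`-string between `x` and its reflection consists of
roots, or of `0`). -/
structure LatticeRoots (D : Type*) [Fintype D] [DecidableEq D] where
  R : Set (D → ℤ)
  finite : R.Finite
  B : LinearMap.BilinForm ℤ (D → ℤ)
  symm : ∀ x y, B x y = B y x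
  pos : ∀ x, x ≠ 0 → 0 < B x x
  zero_notMem : (0 : D → ℤ) ∉ R
  neg_mem : ∀ x ∈ R, -x ∈ R
  sign : ∀ x ∈ R, 0 ≤ x ∨ x ≤ 0
  simple_mem : ∀ g, Pi.single g 1 ∈ R
  sub_mem : ∀ x ∈ R, ∀ y ∈ R, 0 < B x y → x ≠ y → x - y ∈ R
  string : ∀ x ∈ R, ∀ g, ∃ m : ℤ,
    2 * B x (Pi.single g 1) = m * B (Pi.single g 1) (Pi.single g 1) ∧
    ∀ t : ℤ, (0 ≤ t ∧ t ≤ m ∨ m ≤ t ∧ t ≤ 0) →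
      x - t • Pi.single g 1 = 0 ∨ x - t • Pi.single g 1 ∈ R

namespace LatticeRoots

variable {D : Type*} [Fintype D] [DecidableEq D] (S : LatticeRoots D)

lemma B_expand (x y : D → ℤ) : S.B x y = ∑ g, y g * S.B x (Pi.single g 1) := by
  conv_lhs => rw [← Finset.univ_sum_single y, map_sum]
  refine Finset.sum_congr rfl fun g _ => ?_
  have : (Pi.single g (y g) : D → ℤ) = y g • Pi.single g 1 := by
    rw [← Pi.single_smul]; simp
  rw [this, map_smul, smul_eq_mul]

lemma exists_simple_pos {x y : D → ℤ} (hy : 0 ≤ y) (h : 0 < S.B x y) :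
    ∃ g, 0 < y g ∧ 0 < S.B x (Pi.single g 1) := by
  rw [B_expand] at h
  obtain ⟨g, -, hg⟩ := Finset.exists_lt_of_sum_lt (s := Finset.univ) (f := fun _ : D => (0 : ℤ))
    (by simpa using h)
  have h0 : 0 ≤ y g := hy g
  exact ⟨g, lt_of_le_of_ne h0 (by rintro e; simp [← e] at hg), pos_of_mul_pos_right hg h0⟩

/-- The height of a lattice vector. -/
def ht (x : D → ℤ) : ℤ := ∑ g, x g

omit [DecidableEq D] in
lemma ht_sub (x y : D → ℤ) : ht (x - y) = ht x - ht y := by simp [ht]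

omit [DecidableEq D] in
lemma ht_add (x y : D → ℤ) : ht (x + y) = ht x + ht y := by simp [ht, Finset.sum_add_distrib]

@[simp] lemma ht_single (g : D) : ht (Pi.single g 1 : D → ℤ) = 1 := by simp [ht]

omit [DecidableEq D] in
lemma ht_pos {x : D → ℤ} (hx : 0 ≤ x) (h0 : x ≠ 0) : 0 < ht x :=
  Finset.sum_pos' (fun g _ => hx g) <| by
    by_contra! h
    exact h0 (le_antisymm (fun g => h g (Finset.mem_univ g)) hx)

variable {S}

lemma ne_zero {x : D → ℤ} (hx : x ∈ S.R) : x ≠ 0 := fun h => S.zero_notMem (h ▸ hx)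

lemma nonneg_of_pos {x : D → ℤ} (hx : x ∈ S.R) {g : D} (hg : 0 < x g) : 0 ≤ x :=
  (S.sign x hx).resolve_right fun h => absurd (h g) (not_le.2 hg)

/-- From a root with nonnegative coordinates one can subtract a simple root of its support,
unless it is itself simple. -/
lemma exists_sub_simple {x : D → ℤ} (hx : x ∈ S.R) (h0 : 0 ≤ x) :
    ∃ g, 0 < x g ∧ (x = Pi.single g 1 ∨ x - Pi.single g 1 ∈ S.R ∧ 0 ≤ x - Pi.single g 1) := by
  obtain ⟨g, hg, hB⟩ := S.exists_simple_pos h0 (S.pos x (ne_zero hx))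
  refine ⟨g, hg, or_iff_not_imp_left.2 fun hne => ⟨S.sub_mem x hx _ (S.simple_mem g) hB hne, ?_⟩⟩
  intro b
  by_cases hb : b = g
  · subst hb; simp; omega
  · simpa [hb] using h0 b

/-! ### The highest root dominates -/

/-- A positive root to which no simple root can be added is dominant. -/
lemma dominant {d : D → ℤ} (hd : d ∈ S.R) (h0 : 0 ≤ d)
    (htop : ∀ g, d + Pi.single g 1 ∉ S.R) (g : D) : 0 ≤ S.B d (Pi.single g 1) := by
  by_contra! h
  refine htop g ?_
  have := S.sub_mem d hd _ (S.neg_mem _ (S.simple_mem g)) (by simpa using h) ?_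
  · simpa using this
  · rintro e
    have := h0 g
    simp [e] at this

/-- Nothing can be added to a dominant root: adding `s ≥ 0` to `d` would leave a simple root that
can be subtracted again from `d + s`, and induction on the height of `s` applies. -/
lemma add_notMem {d : D → ℤ} (hd : d ∈ S.R) (h0 : 0 ≤ d)
    (htop : ∀ g, d + Pi.single g 1 ∉ S.R) (k : ℕ) :
    ∀ s : D → ℤ, 0 ≤ s → s ≠ 0 → ht s = k → d + s ∉ S.R := by
  induction k with
  | zero => intro s hs hs0 hk; have := ht_pos hs hs0; simp_all
  | succ k ih =>
    intro s hs hs0 hk hmem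
    have hpos : 0 < S.B (d + s) s := by
      have h1 : 0 ≤ S.B d s := by
        rw [S.B_expand]
        exact Finset.sum_nonneg fun g _ => mul_nonneg (hs g) (dominant hd h0 htop g)
      have := S.pos s hs0
      simp only [map_add, LinearMap.add_apply]; omega
    obtain ⟨g, hg, hB⟩ := S.exists_simple_pos hs hpos
    by_cases hsg : s = Pi.single g 1
    · exact htop g (hsg ▸ hmem)
    have hs' : 0 ≤ s - Pi.single g 1 := by
      intro b
      by_cases hb : b = g
      · subst hb; simp; omega
      · simpa [hb] using hs b
    refine ih (s - Pi.single g 1) hs' (sub_ne_zero.2 hsg) (by rw [ht_sub, ht_single]; omega) ?_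
    rw [← add_sub_assoc]
    refine S.sub_mem _ hmem _ (S.simple_mem g) hB fun e => ?_
    -- `d + s` simple would force `d = 0`, since `s ≥ g`
    have hd0 : d = -(s - Pi.single g 1) := by rw [← e]; abel
    exact ne_zero hd (le_antisymm (by rw [hd0]; simpa using hs') h0)

/-- Every coordinate of a root is bounded by that of the highest root. -/
lemma le_highest {d : D → ℤ} (hd : d ∈ S.R) (hpos : ∀ g, 0 < d g)
    (htop : ∀ g, d + Pi.single g 1 ∉ S.R) {x : D → ℤ} (hx : x ∈ S.R) (a : D) : x a ≤ d a := by
  by_contra! hlt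
  have hd0 : 0 ≤ d := fun g => (hpos g).le
  -- a root of greatest height among those with `a`-coordinate at least `x a`
  obtain ⟨y, ⟨hyR, hya⟩, hymax⟩ := Set.exists_max_image {y ∈ S.R | x a ≤ y a} ht
    (S.finite.subset fun _ h => h.1) ⟨x, hx, le_rfl⟩
  have hy0 : 0 ≤ y := nonneg_of_pos hyR (g := a) (by have := hpos a; omega)
  have hytop : ∀ g, y + Pi.single g 1 ∉ S.R := by
    intro g hg
    have h1 : (0 : ℤ) ≤ (Pi.single g 1 : D → ℤ) a := by
      by_cases h : a = g
      · subst h; simp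
      · simp [h]
    have := hymax _ ⟨hg, by simp only [Pi.add_apply]; omega⟩
    rw [ht_add, ht_single] at this
    omega
  have hyd : 0 < S.B y d := by
    rw [S.B_expand]
    refine Finset.sum_pos' (fun g _ => mul_nonneg (hpos g).le (dominant hyR hy0 hytop g)) ?_
    by_contra! h
    have hz : ∀ g, S.B y (Pi.single g 1) = 0 := fun g =>
      le_antisymm (by have := h g (Finset.mem_univ g); have := hpos g; nlinarith)
        (dominant hyR hy0 hytop g)
    have := S.pos y (ne_zero hyR)
    rw [S.B_expand] at this
    simp [hz] at this
  have hne : y ≠ d := by rintro rfl; omega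
  have hsub := S.sub_mem y hyR d hd hyd hne
  rcases S.sign _ hsub with h | h
  · refine add_notMem hd hd0 htop (ht (y - d)).toNat (y - d) h (ne_zero hsub) ?_ (by simpa using hyR)
    have := ht_pos h (ne_zero hsub); omega
  · have h' : 0 ≤ d - y := by rw [← neg_sub]; exact neg_nonneg.2 h
    have h0' : d - y ≠ 0 := sub_ne_zero.2 hne.symm
    refine add_notMem hyR hy0 hytop (ht (d - y)).toNat (d - y) h' h0' ?_ (by simpa using hd)
    have := ht_pos h' h0'; omega

/-- All levels from `1` up to that of a given root are occupied. -/
lemma exists_level {a : D} {k : ℤ} (hk : 1 ≤ k) (N : ℕ) :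
    ∀ x ∈ S.R, k ≤ x a → ht x ≤ N → ∃ y ∈ S.R, y a = k := by
  induction N with
  | zero =>
    intro x hx hxa hN
    have := ht_pos (nonneg_of_pos hx (g := a) (by omega)) (ne_zero hx)
    simp at hN; omega
  | succ N ih =>
    intro x hx hxa hN
    rcases hxa.eq_or_lt with h | h
    · exact ⟨x, hx, h.symm⟩
    obtain ⟨g, hg, hx' | ⟨hx', -⟩⟩ := exists_sub_simple hx (nonneg_of_pos hx (g := a) (by omega))
    · have h1 : x a ≤ 1 := by
        rw [hx', Pi.single_apply]; split <;> omega
      omega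
    · refine ih _ hx' ?_ (by rw [ht_sub, ht_single]; push_cast at hN; omega)
      have h1 : (Pi.single g 1 : D → ℤ) a ≤ 1 := by rw [Pi.single_apply]; split <;> omega
      simp only [Pi.sub_apply]; omega

/-! ### Level sets and the Levi subsystem -/

variable (S) in
/-- A set of roots stable under adding and subtracting the simple roots other than `a`, whenever
the result is a root. -/
def LeviStable (a : D) (O : Set (D → ℤ)) : Prop :=
  O ⊆ S.R ∧ ∀ x ∈ O, ∀ g, g ≠ a →
    (x + Pi.single g 1 ∈ S.R → x + Pi.single g 1 ∈ O) ∧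
    (x - Pi.single g 1 ∈ S.R → x - Pi.single g 1 ∈ O)

lemma LeviStable.string {a : D} {O : Set (D → ℤ)} (hO : S.LeviStable a O)
    (hlev : ∀ x ∈ O, 0 < x a) {x : D → ℤ} (hx : x ∈ O) {g : D} (hg : g ≠ a) :
    ∃ m : ℤ, 2 * S.B x (Pi.single g 1) = m * S.B (Pi.single g 1) (Pi.single g 1) ∧
      x - m • Pi.single g 1 ∈ O := by
  obtain ⟨m, hm, hs⟩ := S.string x (hO.1 hx) g
  refine ⟨m, hm, ?_⟩
  -- the string avoids `0` because subtracting `g` does not change the level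
  have hs' : ∀ t : ℤ, (0 ≤ t ∧ t ≤ m ∨ m ≤ t ∧ t ≤ 0) → x - t • Pi.single g 1 ∈ S.R := by
    intro t ht
    refine (hs t ht).resolve_left fun h0 => ?_
    have := congrFun h0 a
    have := hlev x hx
    simp_all [Ne.symm hg]
  have key : ∀ n : ℕ, ((n : ℤ) ≤ m → x - (n : ℤ) • Pi.single g 1 ∈ O) ∧
      (m ≤ -(n : ℤ) → x - (-(n : ℤ)) • Pi.single g 1 ∈ O) := by
    intro n
    induction n with
    | zero => simp [hx]
    | succ n ih =>
      constructor
      · intro h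
        have e : x - ((n + 1 : ℕ) : ℤ) • (Pi.single g 1 : D → ℤ)
            = x - (n : ℤ) • Pi.single g 1 - Pi.single g 1 := by
          push_cast; rw [add_smul, one_smul]; abel
        have h2 := hs' ((n + 1 : ℕ) : ℤ) (Or.inl ⟨by positivity, h⟩)
        rw [e] at h2 ⊢
        exact (hO.2 _ (ih.1 (by push_cast at h; omega)) g hg).2 h2
      · intro h
        have e : x - (-((n + 1 : ℕ) : ℤ)) • (Pi.single g 1 : D → ℤ)
            = x - (-(n : ℤ)) • Pi.single g 1 + Pi.single g 1 := by
          push_cast; rw [neg_add, add_smul, neg_one_smul]; abel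
        have h2 := hs' (-((n + 1 : ℕ) : ℤ)) (Or.inr ⟨h, by omega⟩)
        rw [e] at h2 ⊢
        exact (hO.2 _ (ih.2 (by push_cast at h; omega)) g hg).1 h2
  rcases le_total 0 m with h | h
  · have := (key m.toNat).1 (by omega)
    rwa [Int.toNat_of_nonneg h] at this
  · have := (key (-m).toNat).2 (by omega)
    rwa [Int.toNat_of_nonneg (by omega), neg_neg] at this

/-- The sum of a Levi-stable set is orthogonal to the Levi subsystem: the reflection in `g`
permutes the set and changes the sign of the pairing with `g`. -/
lemma LeviStable.sum_orthogonal {a : D} {O : Finset (D → ℤ)} (hO : S.LeviStable a O)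
    (hlev : ∀ x ∈ O, 0 < x a) {g : D} (hg : g ≠ a) :
    S.B (∑ x ∈ O, x) (Pi.single g 1) = 0 := by
  have hgg : 0 < S.B (Pi.single g 1) (Pi.single g 1) := S.pos _ (ne_zero (S.simple_mem g))
  have hstr := fun x (hx : x ∈ O) => hO.string hlev (Finset.mem_coe.2 hx) hg
  choose! m hm hmem using hstr
  have hB : ∀ x ∈ O, S.B (x - m x • Pi.single g 1) (Pi.single g 1) = - S.B x (Pi.single g 1) := by
    intro x hx
    have := hm x hx
    simp only [map_sub, map_smul, LinearMap.sub_apply, LinearMap.smul_apply, smul_eq_mul]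
    linarith
  rw [map_sum, LinearMap.sum_apply]
  refine Finset.sum_involution (fun x _ => x - m x • Pi.single g 1) ?_ ?_ ?_ ?_
  · intro x hx; rw [hB x hx]; ring
  · intro x hx h0 e
    have := hB x hx
    rw [e] at this
    omega
  · intro x hx; exact hmem x hx
  · intro x hx
    have h1 := hm _ (hmem x hx)
    rw [hB x hx] at h1
    have h2 := hm x hx
    have h3 : m (x - m x • Pi.single g 1) = - m x :=
      mul_right_cancel₀ hgg.ne' (by linarith)
    simp only [h3, neg_smul]; abel

/-- Two vectors of positive level orthogonal to the Levi subsystem are positive multiples of one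
another, hence have positive inner product. -/
lemma orthogonal_pos {a : D} {x y : D → ℤ} (hxa : 0 < x a) (hya : 0 < y a)
    (hx : ∀ g, g ≠ a → S.B x (Pi.single g 1) = 0)
    (hy : ∀ g, g ≠ a → S.B y (Pi.single g 1) = 0) : 0 < S.B x y := by
  have hz : y a • x - x a • y = 0 := by
    by_contra h
    have := S.pos _ h
    rw [S.B_expand] at this
    refine this.ne' (Finset.sum_eq_zero fun g _ => ?_)
    by_cases hg : g = a
    · subst hg; simp; left; ring
    · simp only [map_sub, map_smul, LinearMap.sub_apply, LinearMap.smul_apply, hx g hg, hy g hg]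
      simp
  have h1 : y a * S.B x y = x a * S.B y y := by
    have := congrArg (fun z => S.B z y) hz
    simp only [map_sub, map_smul, LinearMap.sub_apply, LinearMap.smul_apply, smul_eq_mul, map_zero,
      LinearMap.zero_apply] at this
    linarith
  have h2 : 0 < S.B y y := S.pos y (by rintro rfl; simp at hya)
  have h3 : 0 < y a * S.B x y := h1 ▸ mul_pos hxa h2
  exact pos_of_mul_pos_right h3 hya.le

/-- The averaging argument: two nonempty Levi-stable sets of roots of positive level contain
roots at an acute angle. -/
lemma LeviStable.exists_pos {a : D} {O P : Set (D → ℤ)} (hO : S.LeviStable a O)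
    (hP : S.LeviStable a P) (hOl : ∀ x ∈ O, 0 < x a) (hPl : ∀ x ∈ P, 0 < x a)
    (hOn : O.Nonempty) (hPn : P.Nonempty) : ∃ x ∈ O, ∃ y ∈ P, 0 < S.B x y := by
  lift O to Finset (D → ℤ) using S.finite.subset hO.1
  lift P to Finset (D → ℤ) using S.finite.subset hP.1
  have h := orthogonal_pos (S := S) (a := a) (x := ∑ x ∈ O, x) (y := ∑ y ∈ P, y)
    (by rw [Finset.sum_apply]; exact Finset.sum_pos (fun x hx => hOl x hx) (by simpa using hOn))
    (by rw [Finset.sum_apply]; exact Finset.sum_pos (fun x hx => hPl x hx) (by simpa using hPn))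
    (fun g hg => hO.sum_orthogonal (by simpa using hOl) hg)
    (fun g hg => hP.sum_orthogonal (by simpa using hPl) hg)
  by_contra! hc
  refine absurd h (not_lt.2 ?_)
  simp only [map_sum, LinearMap.sum_apply]
  exact Finset.sum_nonpos fun y hy => Finset.sum_nonpos fun x hx => hc x hx y hy

lemma leviStable_level (a : D) (k : ℤ) : S.LeviStable a {x ∈ S.R | x a = k} := by
  refine ⟨fun _ h => h.1, fun x hx g hg => ⟨fun h => ⟨h, ?_⟩, fun h => ⟨h, ?_⟩⟩⟩ <;>
  simp [Ne.symm hg, hx.2]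

/-- If levels `0 < i < k` are occupied, some root of level `k` is the sum of a root of level `i`
and a root of level `k - i`. -/
lemma exists_sub_mem {a : D} {i k : ℤ} (hi : 0 < i) (hik : i < k)
    (hIn : ∃ x ∈ S.R, x a = i) (hKn : ∃ x ∈ S.R, x a = k) :
    ∃ y ∈ S.R, y a = i ∧ ∃ z ∈ S.R, z a = k ∧ z - y ∈ S.R := by
  obtain ⟨z, hz, y, hy, h⟩ := (leviStable_level (S := S) a k).exists_pos (leviStable_level a i)
    (by rintro x ⟨-, rfl⟩; omega) (by rintro x ⟨-, rfl⟩; omega) hKn hIn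
  refine ⟨y, hy.1, hy.2, z, hz.1, hz.2, S.sub_mem z hz.1 y hy.1 h ?_⟩
  rintro rfl
  have := hy.2.symm.trans hz.2
  omega

/-! ### Closed sets of roots -/

variable (S) in
/-- A closed set of roots containing `±g` for the simple roots `g ≠ a`, and `±d`. -/
structure ClosedSet (a : D) (d : D → ℤ) (Ψ : Set (D → ℤ)) : Prop where
  add_mem : ∀ x ∈ Ψ, ∀ y ∈ Ψ, x + y ∈ S.R → x + y ∈ Ψ
  simple_mem : ∀ g, g ≠ a → Pi.single g 1 ∈ Ψ
  neg_simple_mem : ∀ g, g ≠ a → -Pi.single g 1 ∈ Ψ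
  mem : d ∈ Ψ
  neg_mem : -d ∈ Ψ

namespace ClosedSet

variable {a : D} {d : D → ℤ} {Ψ : Set (D → ℤ)}

/-- The opposite of a closed set is closed. -/
lemma neg (h : S.ClosedSet a d Ψ) : S.ClosedSet a d {x | -x ∈ Ψ} where
  add_mem x hx y hy hxy := by
    have := h.add_mem _ hx _ hy (by rw [← neg_add]; exact S.neg_mem _ hxy)
    simpa [neg_add, add_comm] using this
  simple_mem g hg := h.neg_simple_mem g hg
  neg_simple_mem g hg := by simpa using h.simple_mem g hg
  mem := h.neg_mem
  neg_mem := by simpa using h.mem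

/-- Positive roots of level `0` are built up by adding simple roots other than `a`. -/
lemma levi_aux (h : S.ClosedSet a d Ψ) (N : ℕ) :
    ∀ x ∈ S.R, 0 ≤ x → x a = 0 → ht x ≤ N → x ∈ Ψ := by
  induction N with
  | zero =>
    intro x hx h0 _ hN
    have := ht_pos h0 (ne_zero hx)
    simp at hN; omega
  | succ N ih =>
    intro x hx h0 hxa hN
    obtain ⟨g, hg, hx' | ⟨hx', h0'⟩⟩ := exists_sub_simple hx h0
    · rw [hx']; exact h.simple_mem g (by rintro rfl; omega)
    · have hga : g ≠ a := by rintro rfl; omega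
      have h1 := ih _ hx' h0' (by simp [Ne.symm hga, hxa])
        (by rw [ht_sub, ht_single]; push_cast at hN; omega)
      have := h.add_mem _ h1 _ (h.simple_mem g hga) (by simpa using hx)
      simpa using this

lemma level_zero (h : S.ClosedSet a d Ψ) {x : D → ℤ} (hx : x ∈ S.R) (hxa : x a = 0) : x ∈ Ψ := by
  rcases S.sign x hx with h0 | h0
  · exact h.levi_aux (ht x).toNat x hx h0 hxa (by omega)
  · have := h.neg.levi_aux (ht (-x)).toNat (-x) (S.neg_mem x hx) (neg_nonneg.2 h0)
      (by simpa using hxa) (by omega)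
    simpa using this

/-- Otherwise the roots of this level inside and outside `Ψ` would contain an acute pair, whose
difference is a root of level `0` and so lies in `Ψ`. -/
lemma level_pos (h : S.ClosedSet a d Ψ) {x y : D → ℤ} (hxΨ : x ∈ Ψ) (hxR : x ∈ S.R)
    (hxa : 0 < x a) (hy : y ∈ S.R) (hyx : y a = x a) : y ∈ Ψ := by
  by_contra hyΨ
  have hst : S.LeviStable a {z | z ∈ Ψ ∧ z ∈ S.R ∧ z a = x a} := by
    refine ⟨fun z hz => hz.2.1, fun z hz g hg => ⟨fun hR => ⟨?_, hR, ?_⟩, fun hR => ⟨?_, hR, ?_⟩⟩⟩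
    · exact h.add_mem z hz.1 _ (h.simple_mem g hg) hR
    · simp [Ne.symm hg, hz.2.2]
    · rw [sub_eq_add_neg] at hR ⊢
      exact h.add_mem z hz.1 _ (h.neg_simple_mem g hg) hR
    · simp [Ne.symm hg, hz.2.2]
  have hst' : S.LeviStable a {z | z ∉ Ψ ∧ z ∈ S.R ∧ z a = x a} := by
    refine ⟨fun z hz => hz.2.1, fun z hz g hg => ⟨fun hR => ⟨?_, hR, ?_⟩, fun hR => ⟨?_, hR, ?_⟩⟩⟩
    · intro hc
      have := h.add_mem _ hc _ (h.neg_simple_mem g hg) (by simpa using hz.2.1)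
      exact hz.1 (by simpa using this)
    · simp [Ne.symm hg, hz.2.2]
    · intro hc
      have := h.add_mem _ hc _ (h.simple_mem g hg) (by simpa using hz.2.1)
      exact hz.1 (by simpa using this)
    · simp [Ne.symm hg, hz.2.2]
  obtain ⟨u, hu, v, hv, hB⟩ := hst.exists_pos hst' (by rintro z ⟨-, -, e⟩; omega)
    (by rintro z ⟨-, -, e⟩; omega) ⟨x, hxΨ, hxR, rfl⟩ ⟨y, hyΨ, hy, hyx⟩
  have huv : v - u ∈ S.R := by
    refine S.sub_mem v hv.2.1 u hu.2.1 (by rwa [S.symm]) ?_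
    rintro rfl
    exact hv.1 hu.1
  have h0 := h.level_zero huv (by simp [hu.2.2, hv.2.2])
  have := h.add_mem u hu.1 _ h0 (by simpa using hv.2.1)
  exact hv.1 (by simpa using this)

/-- A closed set containing one root of a given level contains all roots of this level. -/
lemma level (h : S.ClosedSet a d Ψ) {x y : D → ℤ} (hxΨ : x ∈ Ψ) (hxR : x ∈ S.R)
    (hy : y ∈ S.R) (hyx : y a = x a) : y ∈ Ψ := by
  rcases lt_trichotomy (x a) 0 with hx | hx | hx
  · have := h.neg.level_pos (x := -x) (y := -y) (by simpa using hxΨ) (S.neg_mem x hxR)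
      (by simpa using hx) (S.neg_mem y hy) (by simpa using hyx)
    simpa using this
  · exact h.level_zero hy (hyx.trans hx)
  · exact h.level_pos hxΨ hxR hx hy hyx

end ClosedSet

variable (S) in
/-- `d` is the highest root, with all its coordinates positive. -/
structure Highest (d : D → ℤ) : Prop where
  mem : d ∈ S.R
  pos : ∀ g, 0 < d g
  top : ∀ g, d + Pi.single g 1 ∉ S.R

namespace ClosedSet

variable {a : D} {d : D → ℤ} {Ψ : Set (D → ℤ)}

lemma abs_le (hd : S.Highest d) {x : D → ℤ} (hx : x ∈ S.R) (a : D) : x a ≤ d a ∧ -d a ≤ x a := by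
  have h1 := le_highest hd.mem hd.pos hd.top hx a
  have h2 := le_highest hd.mem hd.pos hd.top (S.neg_mem x hx) a
  simp at h2
  omega

/-- A closed set contains every root whose level is divisible by that of the highest root. -/
lemma mem_of_dvd (h : S.ClosedSet a d Ψ) (hd : S.Highest d) {x : D → ℤ} (hx : x ∈ S.R)
    (hdvd : d a ∣ x a) : x ∈ Ψ := by
  obtain ⟨h1, h2⟩ := abs_le hd hx a
  have hp := hd.pos a
  obtain ⟨c, hc⟩ := hdvd
  have hc1 : c ≤ 1 := by nlinarith
  have hc2 : -1 ≤ c := by nlinarith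
  obtain rfl | rfl | rfl : c = -1 ∨ c = 0 ∨ c = 1 := by omega
  · exact h.level h.neg_mem (S.neg_mem d hd.mem) hx (by simp [hc])
  · exact h.level_zero hx (by simp [hc])
  · exact h.level h.mem hd.mem hx (by simp [hc])

lemma exists_level_le (hd : S.Highest d) {k : ℤ} (hk : 1 ≤ k) (hkd : k ≤ d a) :
    ∃ y ∈ S.R, y a = k :=
  exists_level hk (ht d).toNat d hd.mem hkd (by omega)

/-- Subtracting `d`: a closed set containing the roots of level `i` contains those of level
`i - d a`. -/
lemma shift (h : S.ClosedSet a d Ψ) (hd : S.Highest d) {i : ℤ} (hi : 0 < i) (hid : i < d a)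
    (hiΨ : ∀ x ∈ S.R, x a = i → x ∈ Ψ) {x : D → ℤ} (hx : x ∈ S.R) (hxi : x a = i - d a) :
    x ∈ Ψ := by
  obtain ⟨y, hy, hyi, z, hz, hzd, hzy⟩ := exists_sub_mem hi hid
    (exists_level_le hd (by omega) (by omega)) ⟨d, hd.mem, rfl⟩
  have hz' : -z ∈ Ψ := h.mem_of_dvd hd (S.neg_mem z hz) (by simp [hzd])
  have hm : y + -z ∈ S.R := by
    have := S.neg_mem _ hzy
    rwa [neg_sub, sub_eq_add_neg] at this
  exact h.level (h.add_mem y (hiΨ y hy hyi) _ hz' hm) hm hx (by simp [hyi, hzd, hxi, sub_eq_add_neg])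

/-- A closed set containing a root contains every root whose level is congruent to the level of
that root modulo the level of the highest root. -/
lemma residue (h : S.ClosedSet a d Ψ) (hd : S.Highest d) {x y : D → ℤ} (hxΨ : x ∈ Ψ)
    (hxR : x ∈ S.R) (hy : y ∈ S.R) (hyx : d a ∣ y a - x a) : y ∈ Ψ := by
  have hp := hd.pos a
  obtain ⟨hx1, hx2⟩ := abs_le hd hxR a
  obtain ⟨hy1, hy2⟩ := abs_le hd hy a
  by_cases hdy : d a ∣ y a
  · exact h.mem_of_dvd hd hy hdy
  have hx0 : x a ≠ 0 := by rintro e; rw [e] at hyx; simp at hyx; exact hdy hyx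
  have hy0 : y a ≠ 0 := by rintro e; rw [e] at hdy; simp at hdy
  have hyd : y a ≠ d a := by rintro e; rw [e] at hdy; simp at hdy
  have hyd' : y a ≠ -d a := by rintro e; rw [e] at hdy; simp at hdy
  have hxd : x a ≠ d a := by rintro e; rw [e] at hyx; exact hdy (by simpa using hyx)
  have hxd' : x a ≠ -d a := by rintro e; rw [e] at hyx; exact hdy (by simpa using hyx)
  obtain ⟨c, hc⟩ := hyx
  have hc1 : c < 2 := by
    by_contra! hcon
    nlinarith [lt_of_le_of_ne hy1 hyd, lt_of_le_of_ne hx2 hxd'.symm]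
  have hc2 : -2 < c := by
    by_contra! hcon
    nlinarith [lt_of_le_of_ne hx1 hxd, lt_of_le_of_ne hy2 hyd'.symm]
  obtain rfl | rfl | rfl : c = -1 ∨ c = 0 ∨ c = 1 := by omega
  · refine h.shift hd (i := x a) (by omega) (by omega)
      (fun z hz hzx => h.level hxΨ hxR hz hzx) hy (by omega)
  · exact h.level hxΨ hxR hy (by omega)
  · have := h.neg.shift hd (i := -x a) (by omega) (by omega)
      (fun z hz hzx => h.level hxΨ hxR (S.neg_mem z hz) (by simp [hzx])) (S.neg_mem y hy)
      (by simp; omega)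
    simpa using this

/-- The residues modulo `d a` all of whose roots lie in a closed set form a submonoid. -/
lemma residue_add (h : S.ClosedSet a d Ψ) (hd : S.Highest d) {i j : ℤ}
    (hi : ∀ x ∈ S.R, d a ∣ x a - i → x ∈ Ψ) (hj : ∀ x ∈ S.R, d a ∣ x a - j → x ∈ Ψ)
    {x : D → ℤ} (hx : x ∈ S.R) (hxij : d a ∣ x a - (i + j)) : x ∈ Ψ := by
  have hp := hd.pos a
  -- replace `i` and `j` by their representatives in `[0, d a)`
  wlog hij : (0 ≤ i ∧ i < d a) ∧ (0 ≤ j ∧ j < d a) generalizing i j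
  · have hmod : ∀ k : ℤ, d a ∣ k - k % d a := fun k => Int.dvd_self_sub_emod
    refine this (i := i % d a) (j := j % d a) (fun z hz hzi => hi z hz ?_)
      (fun z hz hzj => hj z hz ?_) ?_ ?_
    · have := dvd_sub hzi (hmod i); simpa using this
    · have := dvd_sub hzj (hmod j); simpa using this
    · have := dvd_add hxij (dvd_add (hmod i) (hmod j))
      have e : x a - (i % d a + j % d a) = x a - (i + j) + (i - i % d a + (j - j % d a)) := by ring
      rwa [e]
    · exact ⟨⟨Int.emod_nonneg _ hp.ne', Int.emod_lt_of_pos _ hp⟩,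
        Int.emod_nonneg _ hp.ne', Int.emod_lt_of_pos _ hp⟩
  obtain ⟨⟨hi0, hid⟩, hj0, hjd⟩ := hij
  rcases hi0.eq_or_lt with rfl | hi0
  · exact hj x hx (by simpa using hxij)
  rcases hj0.eq_or_lt with rfl | hj0
  · exact hi x hx (by simpa using hxij)
  rcases le_or_gt (i + j) (d a) with hle | hgt
  · obtain ⟨y, hy, hyi, z, hz, hzk, hzy⟩ := exists_sub_mem (S := S) (a := a) (i := i) (k := i + j)
      hi0 (by omega) (exists_level_le hd (by omega) (by omega))
      (exists_level_le hd (by omega) (by omega))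
    have hzΨ : z ∈ Ψ := by
      have := h.add_mem y (hi y hy (by simp [hyi])) _ (hj _ hzy (by simp [hyi, hzk]))
        (by simpa using hz)
      simpa using this
    exact h.residue hd hzΨ hz hx (by rwa [hzk])
  · -- here `i = (i + j - d a) + (d a - j)` is a sum of two positive levels
    obtain ⟨y, hy, hyk, z, hz, hzi, hzy⟩ := exists_sub_mem (S := S) (a := a) (i := i + j - d a)
      (k := i) (by omega) (by omega) (exists_level_le hd (by omega) (by omega))
      (exists_level_le hd (by omega) (by omega))
    have hyΨ : y ∈ Ψ := by
      have hyz : y - z ∈ S.R := by simpa using S.neg_mem _ hzy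
      have := h.add_mem z (hi z hz (by simp [hzi])) _
        (hj (y - z) hyz ⟨-1, by simp [hyk, hzi]; ring⟩) (by simpa using hy)
      simpa using this
    refine h.residue hd hyΨ hy hx ?_
    rw [hyk]
    have := dvd_add hxij (dvd_refl (d a))
    have e : x a - (i + j - d a) = x a - (i + j) + d a := by ring
    rwa [e]

/-- If the level of the highest root is prime, a closed set containing a root of level not
divisible by it contains all roots. -/
lemma eq_of_prime (h : S.ClosedSet a d Ψ) (hd : S.Highest d) {p : ℕ} (hp : p.Prime)
    (hpd : d a = p) {x : D → ℤ} (hxΨ : x ∈ Ψ) (hxR : x ∈ S.R) (hxa : ¬ d a ∣ x a)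
    {y : D → ℤ} (hy : y ∈ S.R) : y ∈ Ψ := by
  have key : ∀ k : ℕ, ∀ z ∈ S.R, d a ∣ z a - k * x a → z ∈ Ψ := by
    intro k
    induction k with
    | zero => intro z hz hdvd; exact h.mem_of_dvd hd hz (by simpa using hdvd)
    | succ k ih =>
      intro z hz hdvd
      refine h.residue_add hd ih (fun w hw hwx => h.residue hd hxΨ hxR hw hwx) hz ?_
      convert hdvd using 1; push_cast; ring
  -- the class of `x a` generates `ℤ / p`
  have : Fact p.Prime := ⟨hp⟩
  have hx0 : ((x a : ℤ) : ZMod p) ≠ 0 := by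
    rwa [Ne, ZMod.intCast_zmod_eq_zero_iff_dvd, ← hpd]
  refine key (((y a : ℤ) : ZMod p) * ((x a : ℤ) : ZMod p)⁻¹).val y hy ?_
  rw [hpd, ← ZMod.intCast_zmod_eq_zero_iff_dvd]
  push_cast
  rw [ZMod.natCast_val, ZMod.cast_id, mul_assoc, inv_mul_cancel₀ hx0]
  simp

end ClosedSet

end LatticeRoots

/-! ### The root lattice -/

section Lattice

variable {H : LieSubalgebra ℂ L} {Δ : Finset (Module.Dual ℂ H)}

/-- The element of the root lattice with the given coordinates with respect to `Δ`. -/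
noncomputable def latticeMap (Δ : Finset (Module.Dual ℂ H)) : (Δ → ℤ) →ₗ[ℤ] Module.Dual ℂ H :=
  Fintype.linearCombination ℤ (fun γ : Δ => (γ : Module.Dual ℂ H))

lemma latticeMap_apply (x : Δ → ℤ) : latticeMap Δ x = ∑ γ : Δ, x γ • (γ : Module.Dual ℂ H) :=
  Fintype.linearCombination_apply ..

lemma latticeMap_single [DecidableEq Δ] (γ : Δ) : latticeMap Δ (Pi.single γ 1) = γ := by
  rw [latticeMap, Fintype.linearCombination_apply_single, one_smul]

lemma latticeMap_restrict (c : Module.Dual ℂ H → ℤ) :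
    latticeMap Δ (fun γ => c γ) = ∑ γ ∈ Δ, c γ • γ := by
  rw [latticeMap_apply, ← Finset.sum_coe_sort Δ (fun γ => c γ • γ)]

lemma latticeMap_injective
    (hΔ : LinearIndependent ℂ (fun β : Δ => (β : Module.Dual ℂ H))) :
    Function.Injective (latticeMap Δ) := by
  have := hΔ.restrict_scalars (R := ℤ) (by
    intro a b h; simpa using h)
  exact linearIndependent_iff_injective_fintypeLinearCombination.1 this

end Lattice

/-! ### Roots of the Lie algebra -/

section Roots

open LieAlgebra LieAlgebra.IsKilling LieModule

variable [FiniteDimensional ℂ L] [IsKilling ℂ L] {H : LieSubalgebra ℂ L} [H.IsCartanSubalgebra]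
  {Δ : Finset (Module.Dual ℂ H)}

lemma rootSpaceOf_eq (β : Module.Dual ℂ H) :
    rootSpaceOf H β = (rootSpace H β).toSubmodule := by
  ext x
  constructor
  · intro hx
    simp only [LieSubmodule.mem_toSubmodule, mem_genWeightSpace]
    exact fun h => ⟨1, by simpa [sub_eq_zero] using! hx h⟩
  · exact fun hx h => lie_eq_smul_of_mem_rootSpace hx h

lemma isRootOf_iff {β : Module.Dual ℂ H} :
    IsRootOf H β ↔ β ≠ 0 ∧ rootSpace H β ≠ ⊥ := by
  rw [IsRootOf, rootSpaceOf_eq, Ne, Ne, LieSubmodule.toSubmodule_eq_bot]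

/-- A root as one of Mathlib's nonzero weights. -/
lemma IsRootOf.exists_weight {β : Module.Dual ℂ H} (hβ : IsRootOf H β) :
    ∃ w : Weight ℂ H L, w.IsNonZero ∧ (w : H → ℂ) = β := by
  obtain ⟨h0, h⟩ := isRootOf_iff.1 hβ
  refine ⟨⟨β, h⟩, fun hz => h0 ?_, rfl⟩
  ext x
  exact congrFun hz x

lemma isRootOf_weight {w : Weight ℂ H L} (hw : w.IsNonZero) : IsRootOf H w.toLinear := by
  refine isRootOf_iff.2 ⟨fun h => hw ?_, w.genWeightSpace_ne_bot⟩
  funext x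
  exact LinearMap.congr_fun h x

lemma IsRootOf.neg {β : Module.Dual ℂ H} (hβ : IsRootOf H β) : IsRootOf H (-β) := by
  obtain ⟨w, hw, h⟩ := hβ.exists_weight
  have := isRootOf_weight (Weight.IsNonZero.neg hw)
  convert this using 1
  ext x
  simp [h]

/-- If `α`, `β` and `α + β` are roots, then `[L_α, L_β] = L_{α + β}`: the vector of weight `β` is
obtained by lowering the top of its `α`-string at least once, so `e_α` does not kill it. -/
lemma rootSpaceOf_add_le {β γ : Module.Dual ℂ H} (hβ : IsRootOf H β) (hγ : IsRootOf H γ)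
    (hβγ : IsRootOf H (β + γ)) {s : LieSubalgebra ℂ L}
    (hβs : rootSpaceOf H β ≤ s.toSubmodule) (hγs : rootSpaceOf H γ ≤ s.toSubmodule) :
    rootSpaceOf H (β + γ) ≤ s.toSubmodule := by
  obtain ⟨b, hb, hbe⟩ := hβ.exists_weight
  obtain ⟨c, hc, hce⟩ := hγ.exists_weight
  obtain ⟨w, hw, hwe⟩ := hβγ.exists_weight
  have hwe' : (w : H → ℂ) = b + c := by rw [hwe, hbe, hce]; rfl
  rw [rootSpaceOf_eq] at *
  rw [← hbe] at hβs
  rw [← hce] at hγs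
  rw [← hwe]
  have hfr : 1 ≤ chainTopCoeff b c := by
    have := ((rootSpace_zsmul_add_ne_bot_iff b c hb 1).1
      (by rw [one_smul, ← hwe']; exact w.genWeightSpace_ne_bot)).1
    exact_mod_cast this
  obtain ⟨t, ht⟩ : ∃ t, chainTopCoeff b c = t + 1 := ⟨_, (Nat.sub_add_cancel hfr).symm⟩
  obtain ⟨x, hx, x_ne0⟩ := (chainTop b c).exists_ne_zero
  obtain ⟨h, e, f, isSl2, he, hf⟩ := exists_isSl2Triple_of_weight_isNonZero hb
  obtain rfl := isSl2.h_eq_coroot hb he hf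
  have prim : isSl2.HasPrimitiveVectorWith x (chainLength b c : ℂ) :=
    have := lie_mem_genWeightSpace_of_mem_genWeightSpace he hx
    ⟨x_ne0, (chainLength_smul _ _ hx).symm, by rwa [genWeightSpace_add_chainTop _ _ hb] at this⟩
  have hle := chainTopCoeff_le_chainLength b c
  rw [ht] at hle
  set v := ((toEnd ℂ L L) f ^ (t + 1)) x with hv
  have hvc : v ∈ rootSpace H c := by
    have := toEnd_pow_apply_mem hf hx (t + 1)
    have e2 : ((t + 1) • (-(b : H → ℂ)) + chainTop b c : H → ℂ) = c := by
      rw [coe_chainTop, ht, ← Nat.cast_smul_eq_nsmul ℤ, smul_neg, neg_add_cancel_left]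
    rwa [e2] at this
  have hne : ⁅e, v⁆ ≠ 0 := by
    rw [hv, prim.lie_e_pow_succ_toEnd_f]
    refine smul_ne_zero (mul_ne_zero (by exact_mod_cast Nat.succ_ne_zero t) ?_)
      (prim.pow_toEnd_f_ne_zero_of_eq_nat rfl (by omega))
    rw [sub_ne_zero]
    exact_mod_cast (by omega : chainLength b c ≠ t)
  have hmem : ⁅e, v⁆ ∈ rootSpace H w := by
    rw [hwe']
    exact lie_mem_genWeightSpace_of_mem_genWeightSpace he hvc
  have hs : ⁅e, v⁆ ∈ s := s.lie_mem (hβs he) (hγs hvc)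
  intro y hy
  obtain ⟨a, ha⟩ := (finrank_eq_one_iff_of_nonzero' (⟨⁅e, v⁆, hmem⟩ : rootSpace H w)
    (by simpa using hne)).1 (finrank_rootSpace_eq_one w hw) ⟨y, hy⟩
  have : y = a • ⁅e, v⁆ := (congrArg Subtype.val ha).symm
  rw [this]
  exact s.smul_mem a hs


/-! ### The root system in simple-root coordinates -/

/-- For roots `β`, `γ`, with `p`, `q` the lengths of the two halves of the `γ`-string through `β`,
one has `β(γ^∨) = p - q`. -/
lemma IsRootOf.exists_string {β γ : Module.Dual ℂ H} (hβ : IsRootOf H β) (hγ : IsRootOf H γ) :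
    ∃ p q : ℕ, 2 * (rootSystem H).RootForm β γ = ((p : ℂ) - q) * (rootSystem H).RootForm γ γ ∧
      ∀ n : ℤ, -p ≤ n → n ≤ q → β + n • γ = 0 ∨ IsRootOf H (β + n • γ) := by
  obtain ⟨b, hb, hbe⟩ := hβ.exists_weight
  obtain ⟨c, hc, hce⟩ := hγ.exists_weight
  have hb' : b.toLinear = β := by ext; simp [hbe]
  have hc' : c.toLinear = γ := by ext; simp [hce]
  refine ⟨chainBotCoeff c b, chainTopCoeff c b, ?_, fun n hn1 hn2 => or_iff_not_imp_left.2 fun h0 =>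
    isRootOf_iff.2 ⟨h0, ?_⟩⟩
  · have := ((rootSystem H).posRootForm ℤ).two_mul_apply_root_root
      ⟨b, by simpa using hb⟩ ⟨c, by simpa using hc⟩
    rw [rootSystem_pairing_apply, rootSystem_root_apply, rootSystem_root_apply] at this
    simp only at this
    rw [apply_coroot_eq_cast, hb', hc'] at this
    exact_mod_cast this
  · have := (rootSpace_zsmul_add_ne_bot_iff c b hc n).2 ⟨hn2, by omega⟩
    rw [hce, hbe, add_comm] at this
    exact this

lemma rootForm_weight (b : H.root) (β : Module.Dual ℂ H) :
    (rootSystem H).coroot' b β = β (coroot b) := by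
  simp [RootPairing.coroot']

/-- The coordinates of the roots with respect to the base `Δ` form an abstract system. -/
lemma exists_latticeRoots [DecidableEq Δ] (hΔroot : ∀ β ∈ Δ, IsRootOf H β)
    (hΔindep : LinearIndependent ℂ (fun β : Δ => (β : Module.Dual ℂ H)))
    (hbase : ∀ β, IsRootOf H β → ∃ c : Module.Dual ℂ H → ℤ,
      β = ∑ γ ∈ Δ, c γ • γ ∧ ((∀ γ ∈ Δ, 0 ≤ c γ) ∨ (∀ γ ∈ Δ, c γ ≤ 0))) :
    ∃ S : LatticeRoots Δ, S.R = {x | IsRootOf H (latticeMap Δ x)} := by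
  have hinj := latticeMap_injective hΔindep
  -- `u b x = x(b^∨)` is an integer for all `x` in the root lattice
  have hu : ∀ b : H.root, ∃ u : (Δ → ℤ) →ₗ[ℤ] ℤ, ∀ x, (u x : ℂ) = latticeMap Δ x (coroot b) := by
    intro b
    have h1 : ∀ γ : Δ, ∃ k : ℤ, (k : ℂ) = (γ : Module.Dual ℂ H) (coroot b) := by
      intro γ
      obtain ⟨c, -, hc⟩ := (hΔroot γ γ.2).exists_weight
      exact ⟨_, by rw [← hc, apply_coroot_eq_cast]⟩
    choose k hk using h1
    refine ⟨Fintype.linearCombination ℤ k, fun x => ?_⟩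
    rw [Fintype.linearCombination_apply, latticeMap_apply, LinearMap.sum_apply]
    push_cast
    refine Finset.sum_congr rfl fun γ _ => ?_
    simp [hk]
  choose u hu using hu
  let B : LinearMap.BilinForm ℤ (Δ → ℤ) := ∑ b : H.root, LinearMap.BilinForm.linMulLin (u b) (u b)
  have hB : ∀ x y, B x y = ∑ b : H.root, u b x * u b y := by
    intro x y
    simp [B, LinearMap.sum_apply]
  have hBr : ∀ x y, (B x y : ℂ) = (rootSystem H).RootForm (latticeMap Δ x) (latticeMap Δ y) := by
    intro x y
    rw [hB, RootPairing.rootForm_apply_apply]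
    push_cast
    exact Finset.sum_congr rfl fun b _ => by rw [hu, hu, rootForm_weight, rootForm_weight]
  have hpos : ∀ x, x ≠ 0 → 0 < B x x := by
    intro x hx
    rw [hB]
    refine Finset.sum_pos' (fun b _ => mul_self_nonneg _) ?_
    by_contra! hc
    refine hx (hinj ?_)
    rw [map_zero]
    have hspan := RootPairing.IsRootSystem.span_coroot_eq_top (P := rootSystem H)
    refine LinearMap.ext_on_range (v := (rootSystem H).coroot) hspan fun b => ?_
    have h1 : u b x = 0 := mul_self_eq_zero.1 (le_antisymm (hc b (Finset.mem_univ b))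
      (mul_self_nonneg _))
    have := hu b x
    rw [h1] at this
    simpa using this.symm
  have hstring : ∀ x, IsRootOf H (latticeMap Δ x) → ∀ y, IsRootOf H (latticeMap Δ y) →
      ∃ p q : ℕ, 2 * B x y = ((p : ℤ) - q) * B y y ∧
        ∀ n : ℤ, -p ≤ n → n ≤ q → x + n • y = 0 ∨ IsRootOf H (latticeMap Δ (x + n • y)) := by
    intro x hx y hy
    obtain ⟨p, q, h1, h2⟩ := hx.exists_string hy
    refine ⟨p, q, ?_, fun n hn1 hn2 => ?_⟩
    · rw [← hBr, ← hBr] at h1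
      exact_mod_cast h1
    · rw [map_add, map_smul]
      refine (h2 n hn1 hn2).imp_left fun h => hinj ?_
      rw [map_add, map_smul, h, map_zero]
  refine ⟨{
    R := {x | IsRootOf H (latticeMap Δ x)}
    finite := ?_
    B := B
    symm := fun x y => by rw [hB, hB]; exact Finset.sum_congr rfl fun b _ => mul_comm _ _
    pos := hpos
    zero_notMem := fun h => h.1 (map_zero _)
    neg_mem := fun x hx => by
      rw [Set.mem_ofPred_eq, map_neg]; exact IsRootOf.neg hx
    sign := ?_
    simple_mem := fun γ => by
      rw [Set.mem_ofPred_eq, latticeMap_single]; exact hΔroot γ γ.2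
    sub_mem := ?_
    string := ?_ }, rfl⟩
  · refine Set.Finite.of_finite_image (f := latticeMap Δ) ?_ hinj.injOn
    refine (Set.finite_range (fun w : Weight ℂ H L => w.toLinear)).subset ?_
    rintro _ ⟨x, hx, rfl⟩
    obtain ⟨w, -, hw⟩ := IsRootOf.exists_weight hx
    exact ⟨w, by ext; simp [hw]⟩
  · intro x hx
    obtain ⟨c, hc, hs⟩ := hbase _ hx
    rw [← latticeMap_restrict] at hc
    rw [hinj hc]
    exact hs.imp (fun h γ => h γ γ.2) (fun h γ => h γ γ.2)
  · intro x hx y hy hxy hne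
    obtain ⟨p, q, h1, h2⟩ := hstring x hx y hy
    have hyy : 0 < B y y := hpos y (by rintro rfl; exact hy.1 (map_zero _))
    have hpq : 0 < (p : ℤ) - q := pos_of_mul_pos_left (h1 ▸ by omega) hyy.le
    have := (h2 (-1) (by omega) (by omega)).resolve_left
      (by rw [neg_one_smul, ← sub_eq_add_neg]; exact sub_ne_zero.2 hne)
    rwa [neg_one_smul, ← sub_eq_add_neg] at this
  · intro x hx γ
    obtain ⟨p, q, h1, h2⟩ := hstring x hx (Pi.single γ 1)
      (by rw [latticeMap_single]; exact hΔroot γ γ.2)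
    refine ⟨p - q, h1, fun t ht => ?_⟩
    have := h2 (-t) (by omega) (by omega)
    rwa [neg_smul, ← sub_eq_add_neg] at this


/-! ### Subalgebras containing the Cartan subalgebra -/

/-- If a subalgebra contains the root spaces of `±β`, it contains the element of `H` which
corresponds to `β` under the identification of `H` with its dual. -/
lemma cartanEquivDual_symm_mem {β : Module.Dual ℂ H} (hβ : IsRootOf H β) {s : LieSubalgebra ℂ L}
    (h1 : rootSpaceOf H β ≤ s.toSubmodule) (h2 : rootSpaceOf H (-β) ≤ s.toSubmodule) :
    ((cartanEquivDual H).symm β : L) ∈ s := by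
  obtain ⟨b, hb, hbe⟩ := hβ.exists_weight
  have hb' : b.toLinear = β := by ext; simp [hbe]
  rw [rootSpaceOf_eq] at h1 h2
  rw [LinearMap.coe_neg] at h2
  rw [← hbe] at h1 h2
  obtain ⟨h, e, f, isSl2, he, hf⟩ := exists_isSl2Triple_of_weight_isNonZero hb
  obtain rfl := isSl2.h_eq_coroot hb he hf
  have hc : (coroot b : L) ∈ s := isSl2.lie_e_f ▸ s.lie_mem (h1 he) (h2 hf)
  have := (coe_corootSpace_eq_span_singleton' b).symm.trans (coe_corootSpace_eq_span_singleton b)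
  have hmem : (cartanEquivDual H).symm b.toLinear ∈ Submodule.span ℂ {coroot b} :=
    this ▸ Submodule.mem_span_singleton_self _
  obtain ⟨c, hc'⟩ := Submodule.mem_span_singleton.1 hmem
  rw [← hb', ← hc']
  exact s.smul_mem c hc

/-- A subalgebra containing the root spaces of `±γ` for `γ ∈ Δ ∖ {α}` and of `±δ`, where `δ` has
nonzero `α`-coordinate, contains the Cartan subalgebra. -/
lemma cartan_le {n : Module.Dual ℂ H → ℕ} {α δ : Module.Dual ℂ H}
    (hΔroot : ∀ β ∈ Δ, IsRootOf H β)
    (hbase : ∀ β, IsRootOf H β → ∃ c : Module.Dual ℂ H → ℤ, β = ∑ γ ∈ Δ, c γ • γ)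
    (hδroot : IsRootOf H δ) (hδ : δ = ∑ γ ∈ Δ, n γ • γ) (hα : α ∈ Δ) (hnα : 0 < n α)
    {s : LieSubalgebra ℂ L}
    (h1 : ∀ γ ∈ Δ, γ ≠ α → rootSpaceOf H γ ≤ s.toSubmodule)
    (h2 : ∀ γ ∈ Δ, γ ≠ α → rootSpaceOf H (-γ) ≤ s.toSubmodule)
    (h3 : rootSpaceOf H δ ≤ s.toSubmodule) (h4 : rootSpaceOf H (-δ) ≤ s.toSubmodule) :
    H ≤ s := by
  classical
  let T : Submodule ℂ (Module.Dual ℂ H) :=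
    s.toSubmodule.comap (H.toSubmodule.subtype ∘ₗ (cartanEquivDual H).symm.toLinearMap)
  have hT : ∀ β, β ∈ T ↔ ((cartanEquivDual H).symm β : L) ∈ s := fun β => Iff.rfl
  have hγ : ∀ γ ∈ Δ, γ ≠ α → γ ∈ T := fun γ hγ hne =>
    (hT _).2 (cartanEquivDual_symm_mem (hΔroot γ hγ) (h1 γ hγ hne) (h2 γ hγ hne))
  have hδT : δ ∈ T := (hT _).2 (cartanEquivDual_symm_mem hδroot h3 h4)
  have hαT : α ∈ T := by
    rw [hδ, ← Finset.add_sum_erase _ _ hα, Submodule.add_mem_iff_left _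
      (T.sum_mem fun γ hg => T.nsmul_mem (hγ γ (Finset.mem_of_mem_erase hg)
        (Finset.ne_of_mem_erase hg)) _), ← Nat.cast_smul_eq_nsmul ℂ] at hδT
    exact (T.smul_mem_iff (by exact_mod_cast hnα.ne')).1 hδT
  have htop : T = ⊤ := by
    rw [eq_top_iff, ← span_weight_eq_top (K := ℂ) (L := L) (H := H), Submodule.span_le]
    rintro _ ⟨w, rfl⟩
    by_cases hw : w.IsZero
    · have : w.toLinear = 0 := by ext; simp [hw.eq]
      rw [this]
      exact T.zero_mem
    obtain ⟨c, hc⟩ := hbase _ (isRootOf_weight hw)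
    rw [hc]
    refine T.sum_mem fun γ hg => zsmul_mem ?_ _
    by_cases h : γ = α
    · exact h ▸ hαT
    · exact hγ γ hg h
  intro x hx
  have := (hT (cartanEquivDual H ⟨x, hx⟩)).1 (htop ▸ Submodule.mem_top)
  simpa using this

/-- Subalgebras containing `H` are determined by the root spaces they contain. -/
lemma le_of_rootSpaceOf_le {s m : LieSubalgebra ℂ L} (hHs : H ≤ s) (hHm : H ≤ m)
    (h : ∀ β, IsRootOf H β → rootSpaceOf H β ≤ s.toSubmodule →
      rootSpaceOf H β ≤ m.toSubmodule) : s ≤ m := by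
  let N : LieSubmodule ℂ H L :=
    { s.toSubmodule with
      lie_mem := fun {x y} hy => s.lie_mem (hHs x.2) hy }
  have hN : N.toSubmodule ≤ m.toSubmodule := by
    rw [eq_iSup_inf_genWeightSpace ℂ H L N, LieSubmodule.iSup_toSubmodule, iSup_le_iff]
    intro χ y hy
    obtain ⟨hyN, hyχ⟩ := (LieSubmodule.mem_inf _ _ y).1 hy
    by_cases hχ : χ.IsZero
    · refine hHm ?_
      rw [hχ.eq] at hyχ
      have : y ∈ rootSpace H (0 : H → ℂ) := hyχ
      rwa [rootSpace_zero_eq] at this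
    by_cases hy0 : y = 0
    · rw [hy0]; exact m.zero_mem
    have hle : rootSpaceOf H χ.toLinear ≤ s.toSubmodule := by
      rw [rootSpaceOf_eq]
      intro z hz
      obtain ⟨a, ha⟩ := (finrank_eq_one_iff_of_nonzero' (⟨y, hyχ⟩ : rootSpace H χ)
        (by simpa using hy0)).1 (finrank_rootSpace_eq_one χ hχ) ⟨z, hz⟩
      have : z = a • y := (congrArg Subtype.val ha).symm
      rw [this]
      exact s.smul_mem a hyN
    have := h _ (isRootOf_weight hχ) hle
    rw [rootSpaceOf_eq] at this
    exact this hyχ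
  exact hN

/-- The roots, in coordinates, whose root spaces lie in a subalgebra which contains those of
`±γ`, `γ ∈ Δ ∖ {α}`, and `±δ`, form a closed set. -/
lemma closedSet_of_subalgebra [DecidableEq Δ] {S : LatticeRoots Δ}
    (hS : S.R = {x | IsRootOf H (latticeMap Δ x)}) {a : Δ} {d : Δ → ℤ} (hd : d ∈ S.R)
    {s : LieSubalgebra ℂ L}
    (h1 : ∀ γ ∈ Δ, γ ≠ a → rootSpaceOf H γ ≤ s.toSubmodule)
    (h2 : ∀ γ ∈ Δ, γ ≠ a → rootSpaceOf H (-γ) ≤ s.toSubmodule)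
    (h3 : rootSpaceOf H (latticeMap Δ d) ≤ s.toSubmodule)
    (h4 : rootSpaceOf H (-latticeMap Δ d) ≤ s.toSubmodule) :
    S.ClosedSet a d {x | x ∈ S.R ∧ rootSpaceOf H (latticeMap Δ x) ≤ s.toSubmodule} where
  add_mem x hx y hy hxy := by
    refine ⟨hxy, ?_⟩
    have hx1 := hx.1
    have hy1 := hy.1
    rw [hS] at hx1 hy1 hxy
    have hxy' : IsRootOf H (latticeMap Δ (x + y)) := hxy
    rw [map_add] at hxy' ⊢
    exact rootSpaceOf_add_le hx1 hy1 hxy' hx.2 hy.2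
  simple_mem g hg := ⟨S.simple_mem g, by
    rw [latticeMap_single]; exact h1 g g.2 fun h => hg (Subtype.ext h)⟩
  neg_simple_mem g hg := ⟨S.neg_mem _ (S.simple_mem g), by
    rw [map_neg, latticeMap_single]; exact h2 g g.2 fun h => hg (Subtype.ext h)⟩
  mem := ⟨hd, h3⟩
  neg_mem := ⟨S.neg_mem _ hd, by rwa [map_neg]⟩

end Roots

/-! ### Graded subalgebras -/

/-- For `h` in `L` and `c : ℤ`, the sum of the eigenspaces of `ad h` whose eigenvalues are integer
multiples of `c`; these eigenvalues being closed under addition, it is a subalgebra. -/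
def gradedSubalgebra (h : L) (c : ℤ) : LieSubalgebra ℂ L where
  __ := ⨆ k : ℤ, (LieAlgebra.ad ℂ L h).eigenspace ((c * k : ℤ) : ℂ)
  lie_mem' := by
    intro x y hx hy
    simp only [AddSubsemigroup.mem_carrier, AddSubmonoid.mem_toSubsemigroup,
      Submodule.mem_toAddSubmonoid] at hx hy ⊢
    refine Submodule.iSup_induction _ (motive := fun x => ⁅x, y⁆ ∈ _) hx (fun i x hx => ?_)
      (by simp) (fun x x' h h' => by rw [add_lie]; exact Submodule.add_mem _ h h')
    refine Submodule.iSup_induction _ (motive := fun y => ⁅x, y⁆ ∈ _) hy (fun j y hy => ?_)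
      (by simp) (fun y y' h h' => by rw [lie_add]; exact Submodule.add_mem _ h h')
    refine Submodule.mem_iSup_of_mem (i + j) ?_
    rw [Module.End.mem_eigenspace_iff, LieAlgebra.ad_apply] at hx hy ⊢
    rw [leibniz_lie, hx, hy, smul_lie, lie_smul, ← add_smul]
    congr 1
    push_cast
    ring

lemma mem_gradedSubalgebra {h x : L} {c k : ℤ} (hx : ⁅h, x⁆ = ((c * k : ℤ) : ℂ) • x) :
    x ∈ gradedSubalgebra h c :=
  Submodule.mem_iSup_of_mem (p := fun k : ℤ => (LieAlgebra.ad ℂ L h).eigenspace ((c * k : ℤ) : ℂ)) k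
    (Module.End.mem_eigenspace_iff.2 hx)

lemma dvd_of_mem_gradedSubalgebra {h x : L} {c k : ℤ} (hx : ⁅h, x⁆ = (k : ℂ) • x) (hx0 : x ≠ 0)
    (hmem : x ∈ gradedSubalgebra h c) : c ∣ k := by
  by_contra hck
  have hind := Module.End.eigenspaces_iSupIndep (LieAlgebra.ad ℂ L h) (k : ℂ)
  refine hx0 (Submodule.disjoint_def.1 hind x (Module.End.mem_eigenspace_iff.2 hx) ?_)
  refine (iSup_le fun j => ?_ :
    ⨆ k : ℤ, (LieAlgebra.ad ℂ L h).eigenspace ((c * k : ℤ) : ℂ) ≤ _) hmem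
  refine le_iSup₂_of_le (((c * j : ℤ) : ℂ)) (fun e => hck ⟨j, ?_⟩) le_rfl
  exact_mod_cast e.symm

/-- Some element of `H` takes the value `1` on `α` and `0` on the other simple roots; on the root
lattice it computes the `α`-coordinate. -/
lemma exists_level_element [FiniteDimensional ℂ L] {H : LieSubalgebra ℂ L}
    {Δ : Finset (Module.Dual ℂ H)}
    (hΔindep : LinearIndependent ℂ (fun β : Δ => (β : Module.Dual ℂ H))) (a : Δ) :
    ∃ h : H, ∀ x : Δ → ℤ, latticeMap Δ x h = x a := by
  classical
  obtain ⟨F, hF⟩ := LinearMap.exists_extend (Finsupp.lapply a ∘ₗ hΔindep.repr)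
  refine ⟨(Module.evalEquiv ℂ H).symm F, fun x => ?_⟩
  have hFγ : ∀ γ : Δ, F γ = if γ = a then 1 else 0 := by
    intro γ
    have := LinearMap.congr_fun hF ⟨γ, Submodule.subset_span ⟨γ, rfl⟩⟩
    rw [LinearMap.comp_apply, LinearMap.comp_apply, Submodule.subtype_apply] at this
    rw [this, hΔindep.repr_eq_single γ _ rfl]
    simp [Finsupp.single_apply]
  have key : ∀ φ : Module.Dual ℂ H, φ ((Module.evalEquiv ℂ H).symm F) = F φ := by
    intro φ
    simp
  rw [key, latticeMap_apply, map_sum, Finset.sum_eq_single a]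
  · simp [map_zsmul, hFγ]
  · intro γ _ hγ; simp [map_zsmul, hFγ, hγ]
  · simp

/-! ### Maximality -/

theorem gParen_maximal_iff_prime
    [FiniteDimensional ℂ L] [LieAlgebra.IsSimple ℂ L]
    (H : LieSubalgebra ℂ L) (hH : H.IsCartanSubalgebra)
    -- the set Δ of simple roots, the root vectors e, f, the highest root δ with coefficients n:
    (Δ : Finset (Module.Dual ℂ H))
    (e f : Module.Dual ℂ H → L)
    (n : Module.Dual ℂ H → ℕ)
    (δ : Module.Dual ℂ H)
    -- e_β and f_β span the root spaces of β and -β respectively: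
    (he : ∀ β, IsRootOf H β → rootSpaceOf H β = Submodule.span ℂ {e β})
    (hf : ∀ β, IsRootOf H β → rootSpaceOf H (-β) = Submodule.span ℂ {f β})
    -- Δ is a set of simple roots (a base of the root system):
    (hΔroot : ∀ β ∈ Δ, IsRootOf H β)
    (hΔindep : LinearIndependent ℂ (fun β : Δ => (β : Module.Dual ℂ H)))
    (hbase : ∀ β, IsRootOf H β → ∃ c : Module.Dual ℂ H → ℤ,
      β = ∑ γ ∈ Δ, c γ • γ ∧ ((∀ γ ∈ Δ, 0 ≤ c γ) ∨ (∀ γ ∈ Δ, c γ ≤ 0)))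
    -- δ is the highest root, with coefficients n_β > 0:
    (hδroot : IsRootOf H δ)
    (hδ : δ = ∑ γ ∈ Δ, n γ • γ)
    (hnpos : ∀ γ ∈ Δ, 0 < n γ)
    (hhighest : ∀ γ ∈ Δ, ¬ IsRootOf H (δ + γ))
    -- α is a simple root:
    (α : Module.Dual ℂ H) (hα : α ∈ Δ) :
    IsMaxSubalgebra (LieSubalgebra.lieSpan ℂ L
        ({e δ, f δ} ∪ ⋃ β ∈ (Δ : Set (Module.Dual ℂ H)) \ {α}, {e β, f β})) ↔
      Nat.Prime (n α) := by
  classical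
  have : LieAlgebra.IsKilling ℂ L := inferInstance
  obtain ⟨S, hS⟩ := exists_latticeRoots hΔroot hΔindep hbase
  set a : Δ := ⟨α, hα⟩ with ha
  set m := LieSubalgebra.lieSpan ℂ L
    ({e δ, f δ} ∪ ⋃ β ∈ (Δ : Set (Module.Dual ℂ H)) \ {α}, {e β, f β}) with hm
  set d : Δ → ℤ := fun γ => n γ with hd
  have hdδ : latticeMap Δ d = δ := by
    rw [hδ, hd, latticeMap_restrict (fun γ => (n γ : ℤ))]
    simp
  have hda : d a = n α := rfl
  have memR : ∀ x, x ∈ S.R ↔ IsRootOf H (latticeMap Δ x) := fun x => by rw [hS]; rfl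
  have hroot : ∀ β, IsRootOf H β → ∃ x ∈ S.R, latticeMap Δ x = β := by
    intro β hβ
    obtain ⟨c, hc, -⟩ := hbase β hβ
    rw [← latticeMap_restrict] at hc
    exact ⟨_, (memR _).2 (hc ▸ hβ), hc.symm⟩
  have hhigh : S.Highest d := by
    refine ⟨(memR _).2 (hdδ ▸ hδroot), fun γ => ?_, fun γ hγ => ?_⟩
    · exact Int.natCast_pos.2 (hnpos γ γ.2)
    · rw [memR, map_add, latticeMap_single, hdδ] at hγ
      exact hhighest γ γ.2 hγ
  -- root spaces contained in every subalgebra `s ⊇ m`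
  have hgen1 : ∀ s, m ≤ s → ∀ γ ∈ Δ, γ ≠ α → rootSpaceOf H γ ≤ s.toSubmodule := by
    intro s hs γ hγ hne
    rw [he γ (hΔroot γ hγ), Submodule.span_singleton_le_iff_mem]
    refine hs (LieSubalgebra.subset_lieSpan (Or.inr ?_))
    exact Set.mem_biUnion (x := γ) ⟨hγ, hne⟩ (by simp)
  have hgen2 : ∀ s, m ≤ s → ∀ γ ∈ Δ, γ ≠ α → rootSpaceOf H (-γ) ≤ s.toSubmodule := by
    intro s hs γ hγ hne
    rw [hf γ (hΔroot γ hγ), Submodule.span_singleton_le_iff_mem]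
    refine hs (LieSubalgebra.subset_lieSpan (Or.inr ?_))
    exact Set.mem_biUnion (x := γ) ⟨hγ, hne⟩ (by simp)
  have hgen3 : ∀ s, m ≤ s → rootSpaceOf H δ ≤ s.toSubmodule := by
    intro s hs
    rw [he δ hδroot, Submodule.span_singleton_le_iff_mem]
    exact hs (LieSubalgebra.subset_lieSpan (Or.inl (by simp)))
  have hgen4 : ∀ s, m ≤ s → rootSpaceOf H (-δ) ≤ s.toSubmodule := by
    intro s hs
    rw [hf δ hδroot, Submodule.span_singleton_le_iff_mem]
    exact hs (LieSubalgebra.subset_lieSpan (Or.inl (by simp)))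
  have hclosed : ∀ s, m ≤ s →
      S.ClosedSet a d {x | x ∈ S.R ∧ rootSpaceOf H (latticeMap Δ x) ≤ s.toSubmodule} :=
    fun s hs => closedSet_of_subalgebra hS hhigh.mem (hgen1 s hs) (hgen2 s hs)
      (hdδ.symm ▸ hgen3 s hs) (hdδ.symm ▸ hgen4 s hs)
  have hHm : H ≤ m := cartan_le hΔroot (fun β hβ => (hbase β hβ).imp fun _ h => h.1) hδroot hδ hα
    (hnpos α hα) (hgen1 m le_rfl) (hgen2 m le_rfl) (hgen3 m le_rfl) (hgen4 m le_rfl)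
  -- the subalgebras `K c` spanned by `H` and the root spaces of level divisible by `c`
  obtain ⟨h, hh⟩ := exists_level_element hΔindep a
  set K : ℕ → LieSubalgebra ℂ L := fun c => gradedSubalgebra (h : L) c with hK
  have hK1 : ∀ c : ℕ, ∀ x : Δ → ℤ, (c : ℤ) ∣ x a →
      rootSpaceOf H (latticeMap Δ x) ≤ (K c).toSubmodule := by
    rintro c x ⟨k, hk⟩ y hy
    refine mem_gradedSubalgebra (k := k) ?_
    rw [hy h, hh, hk]
  have hK2 : ∀ c : ℕ, ∀ x ∈ S.R, rootSpaceOf H (latticeMap Δ x) ≤ (K c).toSubmodule →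
      (c : ℤ) ∣ x a := by
    intro c x hx hle
    obtain ⟨y, hy, hy0⟩ := (Submodule.ne_bot_iff _).1 ((memR x).1 hx).2
    refine dvd_of_mem_gradedSubalgebra (h := (h : L)) ?_ hy0 (hle hy)
    rw [hy h, hh]
  have hmK : ∀ c : ℕ, c ∣ n α → m ≤ K c := by
    intro c hc
    have hcd : (c : ℤ) ∣ d a := by rw [hda]; exact_mod_cast hc
    have hgK : ∀ β, IsRootOf H β → ∀ x, latticeMap Δ x = β → (c : ℤ) ∣ x a →
        e β ∈ K c ∧ f β ∈ K c := by
      rintro β hβ x rfl hx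
      constructor
      · exact hK1 c x hx (he _ hβ ▸ Submodule.mem_span_singleton_self _)
      · refine hK1 c (-x) (by simpa using hx) ?_
        rw [map_neg, hf _ hβ]
        exact Submodule.mem_span_singleton_self _
    rw [hm, LieSubalgebra.lieSpan_le, Set.union_subset_iff, Set.iUnion₂_subset_iff]
    refine ⟨?_, fun γ hγ => ?_⟩
    · rw [Set.pair_subset_iff]
      exact hgK δ hδroot d hdδ hcd
    · rw [Set.pair_subset_iff]
      refine hgK γ (hΔroot γ hγ.1) (Pi.single ⟨γ, hγ.1⟩ 1) (latticeMap_single _) ?_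
      rw [Pi.single_eq_of_ne]
      · exact dvd_zero _
      · exact fun hc => hγ.2 (congrArg Subtype.val hc).symm
  -- the root space of `α` is missing from `K c` for `c ≥ 2`
  have hKtop : ∀ c : ℕ, 2 ≤ c → K c ≠ ⊤ := by
    intro c hc htop
    have := hK2 c (Pi.single a 1) (S.simple_mem a) (by rw [htop]; exact le_top)
    rw [Pi.single_eq_same] at this
    have := Int.le_of_dvd one_pos this
    omega
  constructor
  · rintro ⟨hmtop, hmax⟩
    by_contra hp
    rcases (Nat.succ_le_of_lt (hnpos α hα)).eq_or_lt with h1 | h2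
    · refine hmtop (eq_top_iff.2 (le_of_rootSpaceOf_le le_top hHm fun β hβ _ => ?_))
      obtain ⟨x, hx, rfl⟩ := hroot β hβ
      refine ((hclosed m le_rfl).mem_of_dvd hhigh hx ?_).2
      rw [hda, ← h1]
      simp
    · obtain ⟨c, hcd, hc2, hcn⟩ := Nat.exists_dvd_of_not_prime2 h2 hp
      have hKm := hmax (K c) (hKtop c hc2) (hmK c hcd)
      obtain ⟨y, hy, hyc⟩ := LatticeRoots.ClosedSet.exists_level_le (a := a) (k := c) hhigh
        (by omega) (by rw [hda]; exact_mod_cast hcn.le)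
      have := hK2 (n α) y hy (((hK1 c y (by rw [hyc])).trans hKm.le).trans (hmK (n α) dvd_rfl))
      rw [hyc, Int.natCast_dvd_natCast] at this
      exact absurd (Nat.le_of_dvd (by omega) this) (by omega)
  · intro hp
    refine ⟨fun htop => hKtop (n α) hp.two_le (top_le_iff.1 (htop ▸ hmK (n α) dvd_rfl)),
      fun s hs hms => le_antisymm ?_ hms⟩
    have hHs := hHm.trans hms
    refine le_of_rootSpaceOf_le hHs hHm fun β hβ hβs => ?_
    obtain ⟨x, hx, rfl⟩ := hroot β hβ
    by_contra hxm
    refine hs (eq_top_iff.2 (le_of_rootSpaceOf_le le_top hHs fun γ hγ _ => ?_))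
    obtain ⟨y, hy, rfl⟩ := hroot γ hγ
    refine ((hclosed s hms).eq_of_prime hhigh hp hda (x := x) ⟨hx, hβs⟩ hx (fun hdvd => hxm ?_) hy).2
    exact ((hclosed m le_rfl).mem_of_dvd hhigh hx hdvd).2
end
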